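/- Reification yields reduction: if H implies H' and r is a reification from H to H', then the homomorphic extension of r to CKA terms is a reduction from H to H'. -/

import Mathlib

namespace CKAH

open Classical

/-! ### Labelled posets and pomsets -/

/-- A labelled poset over alphabet `A`: a finite carrier with a partial order and labelling. -/
structure LPoset (A : Type) : Type 1 where
  carrier : Type
  [fin : Fintype carrier]
  [ord : PartialOrder carrier]
  lab : carrier → A

attribute [instance] LPoset.fin LPoset.ord

/-- Isomorphism of labelled posets: an order isomorphism preserving labels. -/
def LPoset.Iso {A : Type} (u v : LPoset A) : Prop :=
  ∃ e : u.carrier ≃o v.carrier, ∀ x, v.lab (e x) = u.lab x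

theorem LPoset.iso_equivalence (A : Type) : Equivalence (LPoset.Iso (A := A)) where
  refl u := ⟨OrderIso.refl _, fun _ => rfl⟩
  symm := by
    rintro u v ⟨e, he⟩
    exact ⟨e.symm, fun x => by rw [← he (e.symm x), OrderIso.apply_symm_apply]⟩
  trans := by
    rintro u v w ⟨e, he⟩ ⟨f, hf⟩
    exact ⟨e.trans f, fun x => by rw [OrderIso.trans_apply, hf, he]⟩

instance pomSetoid (A : Type) : Setoid (LPoset A) := ⟨LPoset.Iso, LPoset.iso_equivalence A⟩

/-- A pomset is an isomorphism class of labelled posets. -/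
def Pomset (A : Type) : Type 1 := Quotient (pomSetoid A)

/-- Sequential composition of labelled posets: disjoint union, everything on the left
below everything on the right (lexicographic sum order). -/
def LPoset.seqL {A : Type} (u v : LPoset A) : LPoset A where
  carrier := u.carrier ⊕ₗ v.carrier
  fin := inferInstanceAs (Fintype (u.carrier ⊕ v.carrier))
  lab := fun x => Sum.elim u.lab v.lab (ofLex x)

/-- Parallel composition of labelled posets: disjoint union with no cross ordering. -/
def LPoset.parL {A : Type} (u v : LPoset A) : LPoset A where
  carrier := u.carrier ⊕ v.carrier
  lab := Sum.elim u.lab v.lab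

def Pomset.seq {A : Type} : Pomset A → Pomset A → Pomset A :=
  Quotient.map₂ LPoset.seqL (by
    rintro u₁ u₂ ⟨e, he⟩ v₁ v₂ ⟨f, hf⟩
    refine ⟨(RelIso.sumLexCongr e f :
      (u₁.carrier ⊕ₗ v₁.carrier) ≃o (u₂.carrier ⊕ₗ v₂.carrier)), ?_⟩
    rintro (x | x)
    · exact he x
    · exact hf x)

/-- Order isomorphism between disjoint-union orders, from component isomorphisms. -/
def sumOrderIso {α β γ δ : Type} [PartialOrder α] [PartialOrder β] [PartialOrder γ]
    [PartialOrder δ] (e : α ≃o γ) (f : β ≃o δ) : (α ⊕ β) ≃o (γ ⊕ δ) where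
  toEquiv := Equiv.sumCongr e.toEquiv f.toEquiv
  map_rel_iff' := by
    rintro (x | x) (y | y) <;> simp [Sum.le_def, e.le_iff_le, f.le_iff_le]

def Pomset.par {A : Type} : Pomset A → Pomset A → Pomset A :=
  Quotient.map₂ LPoset.parL (by
    rintro u₁ u₂ ⟨e, he⟩ v₁ v₂ ⟨f, hf⟩
    refine ⟨sumOrderIso e f, ?_⟩
    rintro (x | x)
    · exact he x
    · exact hf x)

def LPoset.emptyL (A : Type) : LPoset A := { carrier := Fin 0, lab := fun x => x.elim0 }

def LPoset.singleL {A : Type} (a : A) : LPoset A := { carrier := PUnit, lab := fun _ => a }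

/-- The empty pomset `1`. -/
def Pomset.empty (A : Type) : Pomset A := ⟦LPoset.emptyL A⟧

/-- The single-letter pomset. -/
def Pomset.single {A : Type} (a : A) : Pomset A := ⟦LPoset.singleL a⟧

/-- Subsumption on labelled posets: `u ⊑ v` iff there is a label-preserving
order-preserving bijection from the carrier of `v` to that of `u`. -/
def LPoset.subL {A : Type} (u v : LPoset A) : Prop :=
  ∃ h : v.carrier ≃ u.carrier,
    (∀ x, u.lab (h x) = v.lab x) ∧ ∀ x y : v.carrier, x ≤ y → h x ≤ h y

/-- Subsumption of pomsets: `Pomset.sub U V` means `U ⊑ V`. -/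
def Pomset.sub {A : Type} : Pomset A → Pomset A → Prop :=
  Quotient.lift₂ LPoset.subL (by
    rintro u₁ v₁ u₂ v₂ ⟨e, he⟩ ⟨f, hf⟩
    refine propext ⟨?_, ?_⟩
    · rintro ⟨h, hl, hm⟩
      refine ⟨(f.toEquiv.symm.trans h).trans e.toEquiv, fun x => ?_, fun x y hxy => ?_⟩
      · show u₂.lab (e (h (f.symm x))) = v₂.lab x
        rw [he, hl, ← hf (f.symm x), OrderIso.apply_symm_apply]
      · simp only [Equiv.trans_apply]
        exact e.le_iff_le.mpr (hm _ _ (f.symm.le_iff_le.mpr hxy))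
    · rintro ⟨h, hl, hm⟩
      refine ⟨(f.toEquiv.trans h).trans e.toEquiv.symm, fun x => ?_, fun x y hxy => ?_⟩
      · show u₁.lab (e.symm (h (f x))) = v₁.lab x
        rw [← he (e.symm (h (f x))), OrderIso.apply_symm_apply, hl, hf]
      · simp only [Equiv.trans_apply]
        exact e.symm.le_iff_le.mpr (hm _ _ (f.le_iff_le.mpr hxy)))

def LPoset.isWordL {A : Type} (u : LPoset A) : Prop := ∀ x y : u.carrier, x ≤ y ∨ y ≤ x

/-- A pomset is a word when it is totally ordered. -/
def Pomset.IsWord {A : Type} : Pomset A → Prop :=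
  Quotient.lift LPoset.isWordL (by
    rintro u v ⟨e, -⟩
    refine propext ⟨fun h x y => ?_, fun h x y => ?_⟩
    · rcases h (e.symm x) (e.symm y) with h' | h'
      · exact Or.inl (e.symm.le_iff_le.mp h')
      · exact Or.inr (e.symm.le_iff_le.mp h')
    · rcases h (e x) (e y) with h' | h'
      · exact Or.inl (e.le_iff_le.mp h')
      · exact Or.inr (e.le_iff_le.mp h'))

def LPoset.mapL {A B : Type} (f : A → B) (u : LPoset A) : LPoset B :=
  { carrier := u.carrier, lab := f ∘ u.lab }

/-- Relabelling of pomsets along a function on letters. -/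
def Pomset.map {A B : Type} (f : A → B) : Pomset A → Pomset B :=
  Quotient.map (LPoset.mapL f)
    (by rintro u v ⟨e, he⟩; exact ⟨e, fun x => congrArg f (he x)⟩)

def LPoset.overL {A : Type} (Γ : Set A) (u : LPoset A) : Prop := ∀ x, u.lab x ∈ Γ

/-- All labels of the pomset belong to `Γ`. -/
def Pomset.Over {A : Type} (Γ : Set A) : Pomset A → Prop :=
  Quotient.lift (LPoset.overL Γ) (by
    rintro u v ⟨e, he⟩
    refine propext ⟨fun h x => ?_, fun h x => ?_⟩
    · have h2 := he (e.symm x)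
      rw [OrderIso.apply_symm_apply] at h2
      rw [h2]; exact h _
    · rw [← he x]; exact h _)

/-- Series-parallel pomsets. -/
inductive Pomset.IsSP {A : Type} : Pomset A → Prop
  | empty : Pomset.IsSP (Pomset.empty A)
  | single (a : A) : Pomset.IsSP (Pomset.single a)
  | seq {U V : Pomset A} : Pomset.IsSP U → Pomset.IsSP V → Pomset.IsSP (Pomset.seq U V)
  | par {U V : Pomset A} : Pomset.IsSP U → Pomset.IsSP V → Pomset.IsSP (Pomset.par U V)

def SPset (A : Type) : Set (Pomset A) := {U | U.IsSP}

/-! ### Pomset contexts -/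

/-- Contexts are pomsets over `Option A`, where `none` plays the role of `*`.
`uniqueStarL` says there is exactly one `*`-labelled node. -/
def LPoset.uniqueStarL {A : Type} (c : LPoset (Option A)) : Prop := ∃! x, c.lab x = none

theorem LPoset.uniqueStarL_congr {A : Type} {u v : LPoset (Option A)}
    (e : u.carrier ≃o v.carrier) (he : ∀ x, v.lab (e x) = u.lab x) :
    u.uniqueStarL ↔ v.uniqueStarL := by
  constructor
  · rintro ⟨x, hx, hux⟩
    refine ⟨e x, show v.lab (e x) = none by rw [he]; exact hx, fun y hy => ?_⟩
    have h2 := he (e.symm y)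
    rw [OrderIso.apply_symm_apply] at h2
    have h3 : e.symm y = x := hux _ (h2.symm.trans hy)
    rw [← h3, OrderIso.apply_symm_apply]
  · rintro ⟨x, hx, hvx⟩
    refine ⟨e.symm x, ?_, fun y hy => ?_⟩
    · show u.lab (e.symm x) = none
      have h2 := he (e.symm x)
      rw [OrderIso.apply_symm_apply] at h2
      rw [← h2]; exact hx
    · have h3 : e y = x := hvx _ (show v.lab (e y) = none by rw [he]; exact hy)
      rw [← h3, OrderIso.symm_apply_apply]

/-- A pomset context: exactly one node labelled `*`. -/
def Pomset.IsCtx {A : Type} : Pomset (Option A) → Prop :=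
  Quotient.lift LPoset.uniqueStarL
    (fun _ _ h => propext (LPoset.uniqueStarL_congr h.choose h.choose_spec))

/-- Series-parallel pomset contexts. -/
def Pomset.IsSPCtx {A : Type} (C : Pomset (Option A)) : Prop := C.IsCtx ∧ C.IsSP

/-- Sequential (totally ordered) pomset contexts. -/
def Pomset.IsSeqCtx {A : Type} (C : Pomset (Option A)) : Prop := C.IsCtx ∧ C.IsWord

/-- The trivial context `*`. -/
def starCtx (A : Type) : Pomset (Option A) := Pomset.single (none : Option A)

theorem option_get_eq_get {α : Type} {o₁ o₂ : Option α} (h : o₁ = o₂) (h₁ : o₁.isSome)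
    (h₂ : o₂.isSome) : o₁.get h₁ = o₂.get h₂ := by subst h; rfl

/-- The order of `C[U]`: the orders of `C` (restricted away from `*`) and of `U`, with a
point of `C` below (resp. above) all of `U` when it is below (resp. above) the unique
`*`-node of `C`.  (For well-definedness of the order, the cross-relations are guarded by
the requirement that the star node is unique, which holds for every genuine context.) -/
def LPoset.insLe {A : Type} (c : LPoset (Option A)) (u : LPoset A) :
    ({x : c.carrier // c.lab x ≠ none} ⊕ u.carrier) →
    ({x : c.carrier // c.lab x ≠ none} ⊕ u.carrier) → Prop
  | Sum.inl x, Sum.inl y => x.val ≤ y.val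
  | Sum.inr x, Sum.inr y => x ≤ y
  | Sum.inl x, Sum.inr _ => c.uniqueStarL ∧ ∃ s, c.lab s = none ∧ x.val ≤ s
  | Sum.inr _, Sum.inl y => c.uniqueStarL ∧ ∃ s, c.lab s = none ∧ s ≤ y.val

/-- Insertion of a labelled poset `u` into the gap of a context `c`: the `*`-labelled
node is removed and `u` is put in its place, inheriting the order relations of `*`. -/
noncomputable def LPoset.insL {A : Type} (c : LPoset (Option A)) (u : LPoset A) :
    LPoset A where
  carrier := {x : c.carrier // c.lab x ≠ none} ⊕ u.carrier
  fin := by classical exact inferInstance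
  ord :=
    { le := LPoset.insLe c u
      lt := fun p q => LPoset.insLe c u p q ∧ ¬ LPoset.insLe c u q p
      lt_iff_le_not_ge := fun _ _ => Iff.rfl
      le_refl := by rintro (x | x) <;> exact le_refl _
      le_trans := by
        rintro (x | x) (y | y) (z | z) h1 h2
        · exact le_trans h1 h2
        · obtain ⟨hu, s, hs, hys⟩ := h2
          exact ⟨hu, s, hs, le_trans h1 hys⟩
        · obtain ⟨hu, s, hs, hxs⟩ := h1
          obtain ⟨-, t, ht, htz⟩ := h2
          obtain ⟨w, hw, huniq⟩ := hu
          have hst : s = t := (huniq s hs).trans (huniq t ht).symm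
          exact le_trans (hst ▸ hxs) htz
        · exact h1
        · obtain ⟨hu, s, hs, hsy⟩ := h1
          exact ⟨hu, s, hs, le_trans hsy h2⟩
        · obtain ⟨hu, s, hs, hsy⟩ := h1
          obtain ⟨-, t, ht, hyt⟩ := h2
          obtain ⟨w, hw, huniq⟩ := hu
          have hst : s = t := (huniq s hs).trans (huniq t ht).symm
          have hy : y.val = s := le_antisymm (hst.symm ▸ hyt) hsy
          exact absurd (hy.symm ▸ hs) y.prop
        · exact h2
        · exact le_trans h1 h2
      le_antisymm := by
        rintro (x | x) (y | y) h1 h2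
        · exact congrArg Sum.inl (Subtype.ext (le_antisymm h1 h2))
        · obtain ⟨hu, s, hs, hxs⟩ := h1
          obtain ⟨-, t, ht, htx⟩ := h2
          obtain ⟨w, hw, huniq⟩ := hu
          have hst : s = t := (huniq s hs).trans (huniq t ht).symm
          have hx : x.val = s := le_antisymm hxs (hst.symm ▸ htx)
          exact absurd (hx.symm ▸ hs) x.prop
        · obtain ⟨hu, s, hs, hsy⟩ := h1
          obtain ⟨-, t, ht, hyt⟩ := h2
          obtain ⟨w, hw, huniq⟩ := hu
          have hst : s = t := (huniq s hs).trans (huniq t ht).symm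
          have hy : y.val = s := le_antisymm (hst.symm ▸ hyt) hsy
          exact absurd (hy.symm ▸ hs) y.prop
        · exact congrArg Sum.inr (le_antisymm h1 h2) }
  lab := Sum.elim (fun x => (c.lab x.val).get (Option.isSome_iff_ne_none.mpr x.prop)) u.lab

/-- `Pomset.ins C U` is `C[U]`: plugging the pomset `U` into the gap of the context `C`. -/
noncomputable def Pomset.ins {A : Type} : Pomset (Option A) → Pomset A → Pomset A :=
  Quotient.map₂ LPoset.insL (by
    rintro c₁ c₂ ⟨e, he⟩ u₁ u₂ ⟨f, hf⟩
    have hstar : c₁.uniqueStarL ↔ c₂.uniqueStarL := LPoset.uniqueStarL_congr e he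
    refine ⟨{ toEquiv := Equiv.sumCongr
                (e.toEquiv.subtypeEquiv fun x => by
                  rw [show c₂.lab (e.toEquiv x) = c₁.lab x from he x]) f.toEquiv
              map_rel_iff' := ?_ }, ?_⟩
    · rintro (x | x) (y | y)
      · exact e.le_iff_le
      · show (c₂.uniqueStarL ∧ ∃ s, c₂.lab s = none ∧ (e x.val : c₂.carrier) ≤ s) ↔
             (c₁.uniqueStarL ∧ ∃ s, c₁.lab s = none ∧ x.val ≤ s)
        constructor
        · rintro ⟨hu, s, hs, hxs⟩
          refine ⟨hstar.mpr hu, e.symm s, ?_, ?_⟩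
          · have h2 := he (e.symm s)
            rw [OrderIso.apply_symm_apply] at h2
            rw [← h2]; exact hs
          · exact e.le_iff_le.mp (by rw [OrderIso.apply_symm_apply]; exact hxs)
        · rintro ⟨hu, s, hs, hxs⟩
          exact ⟨hstar.mp hu, e s, by rw [he]; exact hs, e.le_iff_le.mpr hxs⟩
      · show (c₂.uniqueStarL ∧ ∃ s, c₂.lab s = none ∧ s ≤ (e y.val : c₂.carrier)) ↔
             (c₁.uniqueStarL ∧ ∃ s, c₁.lab s = none ∧ s ≤ y.val)
        constructor
        · rintro ⟨hu, s, hs, hsy⟩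
          refine ⟨hstar.mpr hu, e.symm s, ?_, ?_⟩
          · have h2 := he (e.symm s)
            rw [OrderIso.apply_symm_apply] at h2
            rw [← h2]; exact hs
          · exact e.le_iff_le.mp (by rw [OrderIso.apply_symm_apply]; exact hsy)
        · rintro ⟨hu, s, hs, hsy⟩
          exact ⟨hstar.mp hu, e s, by rw [he]; exact hs, e.le_iff_le.mpr hsy⟩
      · exact f.le_iff_le
    · rintro (x | x)
      · exact option_get_eq_get (he x.val) _ _
      · exact hf x)

/-! ### Pomset languages -/

abbrev Lang (A : Type) := Set (Pomset A)

def Lang.seq {A : Type} (L K : Lang A) : Lang A :=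
  {W | ∃ U ∈ L, ∃ V ∈ K, W = Pomset.seq U V}

def Lang.par {A : Type} (L K : Lang A) : Lang A :=
  {W | ∃ U ∈ L, ∃ V ∈ K, W = Pomset.par U V}

def Lang.pow {A : Type} (L : Lang A) : ℕ → Lang A
  | 0 => {Pomset.empty A}
  | n + 1 => Lang.seq (Lang.pow L n) L

def Lang.star {A : Type} (L : Lang A) : Lang A := ⋃ n, L.pow n

/-- Application of a context to a language: `C[L] = {C[U] : U ∈ L}`. -/
def Ctx.img {A : Type} (C : Pomset (Option A)) (L : Lang A) : Lang A :=
  {W | ∃ U ∈ L, W = C.ins U}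

/-! ### CKA terms and semantics -/

inductive Term (A : Type) : Type
  | zero : Term A
  | one : Term A
  | var : A → Term A
  | add : Term A → Term A → Term A
  | seq : Term A → Term A → Term A
  | par : Term A → Term A → Term A
  | star : Term A → Term A

/-- Pomset language semantics of CKA terms. -/
def Term.lang {A : Type} : Term A → Lang A
  | .zero => ∅
  | .one => {Pomset.empty A}
  | .var a => {Pomset.single a}
  | .add e f => e.lang ∪ f.lang
  | .seq e f => Lang.seq e.lang f.lang
  | .par e f => Lang.par e.lang f.lang
  | .star e => Lang.star e.lang

/-- Sets of hypotheses: a hypothesis `e ≤ f` is the pair `(e, f)`. -/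
abbrev HypSet (A : Type) := Set (Term A × Term A)

/-- The congruence `≡^H` on CKA terms generated by the CKA axioms and the hypotheses `H`
(the constructor `hyp` encodes `e ≦^H f`, i.e. `e + f ≡^H f`, for `e ≤ f ∈ H`). -/
inductive CongH {A : Type} (H : HypSet A) : Term A → Term A → Prop
  | refl (e) : CongH H e e
  | symm {e f} : CongH H e f → CongH H f e
  | trans {e f g} : CongH H e f → CongH H f g → CongH H e g
  | addCong {e e' f f'} : CongH H e e' → CongH H f f' → CongH H (.add e f) (.add e' f')
  | seqCong {e e' f f'} : CongH H e e' → CongH H f f' → CongH H (.seq e f) (.seq e' f')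
  | parCong {e e' f f'} : CongH H e e' → CongH H f f' → CongH H (.par e f) (.par e' f')
  | starCong {e e'} : CongH H e e' → CongH H (.star e) (.star e')
  | addZero (e) : CongH H (.add e .zero) e
  | addIdem (e) : CongH H (.add e e) e
  | addComm (e f) : CongH H (.add e f) (.add f e)
  | addAssoc (e f g) : CongH H (.add e (.add f g)) (.add (.add e f) g)
  | seqAssoc (e f g) : CongH H (.seq e (.seq f g)) (.seq (.seq e f) g)
  | seqDistL (e f g) : CongH H (.seq e (.add f g)) (.add (.seq e f) (.seq e g))
  | seqDistR (e f g) : CongH H (.seq (.add e f) g) (.add (.seq e g) (.seq f g))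
  | seqOneR (e) : CongH H (.seq e .one) e
  | seqOneL (e) : CongH H (.seq .one e) e
  | seqZeroR (e) : CongH H (.seq e .zero) .zero
  | seqZeroL (e) : CongH H (.seq .zero e) .zero
  | parComm (e f) : CongH H (.par e f) (.par f e)
  | parOne (e) : CongH H (.par e .one) e
  | parZero (e) : CongH H (.par e .zero) .zero
  | parAssoc (e f g) : CongH H (.par e (.par f g)) (.par (.par e f) g)
  | parDist (e f g) : CongH H (.par e (.add f g)) (.add (.par e f) (.par e g))
  | starUnfoldL (e) : CongH H (.add .one (.seq e (.star e))) (.star e)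
  | starUnfoldR (e) : CongH H (.add .one (.seq (.star e) e)) (.star e)
  | lfpL {e f g} : CongH H (.add (.add e (.seq f g)) g) g →
      CongH H (.add (.seq (.star f) e) g) g
  | lfpR {e f g} : CongH H (.add (.add e (.seq f g)) f) f →
      CongH H (.add (.seq e (.star g)) f) f
  | hyp {e f} : (e, f) ∈ H → CongH H (.add e f) f

/-- `e ≦^H f`, the natural order `e + f ≡^H f`. -/
def LeH {A : Type} (H : HypSet A) (e f : Term A) : Prop := CongH H (.add e f) f

/-- The `H`-closure of a pomset language, as an inductive predicate: the smallest language
containing `L` such that for all `e ≤ f ∈ H` and series-parallel contexts `C`,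
if `C[⟦f⟧] ⊆ cl` then `C[⟦e⟧] ⊆ cl`. -/
inductive closure {A : Type} (H : HypSet A) (L : Lang A) : Pomset A → Prop
  | base {U} : U ∈ L → closure H L U
  | step {e f : Term A} (hef : (e, f) ∈ H) {C : Pomset (Option A)} (hC : C.IsSPCtx)
      (hf : ∀ V ∈ f.lang, closure H L (C.ins V)) {U} (hU : U ∈ e.lang) :
      closure H L (C.ins U)

/-- `cl H L` is the `H`-closure of `L`. -/
def cl {A : Type} (H : HypSet A) (L : Lang A) : Lang A := {U | closure H L U}

/-- The sequential closure: like `cl` but only sequential contexts are used. -/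
inductive seqClosure {A : Type} (H : HypSet A) (L : Lang A) : Pomset A → Prop
  | base {U} : U ∈ L → seqClosure H L U
  | step {e f : Term A} (hef : (e, f) ∈ H) {C : Pomset (Option A)} (hC : C.IsSeqCtx)
      (hf : ∀ V ∈ f.lang, seqClosure H L (C.ins V)) {U} (hU : U ∈ e.lang) :
      seqClosure H L (C.ins U)

def seqCl {A : Type} (H : HypSet A) (L : Lang A) : Lang A := {U | seqClosure H L U}

/-! ### Implication, completeness, reductions -/

/-- `H` implies `H'`: every hypothesis of `H'` is derivable from `H`. -/
def Implies {A : Type} (H H' : HypSet A) : Prop := ∀ p ∈ H', LeH H p.1 p.2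

/-- `H` is complete: semantic equivalence implies axiomatic equivalence. -/
def Complete {A : Type} (H : HypSet A) : Prop :=
  ∀ e f : Term A, cl H e.lang = cl H f.lang → CongH H e f

/-- A reduction from `H` to `H'` (presupposing that `H` implies `H'`). -/
structure IsReduction {A : Type} (H H' : HypSet A) (r : Term A → Term A) : Prop where
  implies : Implies H H'
  equiv : ∀ e, CongH H e (r e)
  reflect : ∀ e f : Term A, cl H e.lang = cl H f.lang → cl H' (r e).lang = cl H' (r f).lang

def Reduces {A : Type} (H H' : HypSet A) : Prop := ∃ r, IsReduction H H' r

/-- A strong reduction from `H` to `H'`. -/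
structure IsStrongReduction {A : Type} (H H' : HypSet A) (r : Term A → Term A)
    extends IsReduction H H' r : Prop where
  strong : ∀ e : Term A, cl H e.lang = cl H' (r e).lang

def StronglyReduces {A : Type} (H H' : HypSet A) : Prop := ∃ r, IsStrongReduction H H' r

/-- `H` factorises into `H₀` and `H₁`. -/
def Factorises {A : Type} (H H₀ H₁ : HypSet A) : Prop :=
  Implies H H₀ ∧ Implies H H₁ ∧ ∀ L : Lang A, L ⊆ SPset A → cl H L = cl H₁ (cl H₀ L)

/-! ### The exchange hypotheses and sp-subsumption -/

/-- The exchange hypotheses `(e∥f)·(g∥h) ≤ (e·g)∥(f·h)`. -/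
def exch (A : Type) : HypSet A :=
  {p | ∃ e f g h : Term A,
    p = (Term.seq (.par e f) (.par g h), Term.par (.seq e g) (.seq f h))}

/-- `⊑^sp`: the smallest precongruence on series-parallel pomsets satisfying the
exchange inequality. -/
inductive spSub {A : Type} : Pomset A → Pomset A → Prop
  | refl {U : Pomset A} : U.IsSP → spSub U U
  | trans {U V W} : spSub U V → spSub V W → spSub U W
  | seqCong {U V U' V'} : spSub U V → spSub U' V' → spSub (Pomset.seq U U') (Pomset.seq V V')
  | parCong {U V U' V'} : spSub U V → spSub U' V' → spSub (Pomset.par U U') (Pomset.par V V')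
  | exch {U V W X : Pomset A} : U.IsSP → V.IsSP → W.IsSP → X.IsSP →
      spSub (Pomset.seq (Pomset.par U V) (Pomset.par W X))
            (Pomset.par (Pomset.seq U W) (Pomset.seq V X))

/-! ### KA terms, grounded hypotheses, sequential reductions -/

/-- A term is a KA term when it contains no `∥`. -/
def Term.noPar {A : Type} : Term A → Prop
  | .zero => True
  | .one => True
  | .var _ => True
  | .add e f => e.noPar ∧ f.noPar
  | .seq e f => e.noPar ∧ f.noPar
  | .par _ _ => False
  | .star e => e.noPar

/-- A non-empty word. -/
def IsNonemptyWord {A : Type} (W : Pomset A) : Prop := W.IsWord ∧ W ≠ Pomset.empty A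

/-- A set of hypotheses is grounded when in each hypothesis `e ≤ f`, `e` is a KA term and
`⟦f⟧ = {W}` for a non-empty word `W`. -/
def Grounded {A : Type} (H : HypSet A) : Prop :=
  ∀ p ∈ H, p.1.noPar ∧ ∃ W : Pomset A, IsNonemptyWord W ∧ p.2.lang = {W}

/-- `≡_KA^H`: the congruence on terms generated by the axioms of `≡` not involving `∥`
together with the hypotheses of `H`. -/
inductive KACong {A : Type} (H : HypSet A) : Term A → Term A → Prop
  | refl (e) : KACong H e e
  | symm {e f} : KACong H e f → KACong H f e
  | trans {e f g} : KACong H e f → KACong H f g → KACong H e g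
  | addCong {e e' f f'} : KACong H e e' → KACong H f f' → KACong H (.add e f) (.add e' f')
  | seqCong {e e' f f'} : KACong H e e' → KACong H f f' → KACong H (.seq e f) (.seq e' f')
  | starCong {e e'} : KACong H e e' → KACong H (.star e) (.star e')
  | addZero (e) : KACong H (.add e .zero) e
  | addIdem (e) : KACong H (.add e e) e
  | addComm (e f) : KACong H (.add e f) (.add f e)
  | addAssoc (e f g) : KACong H (.add e (.add f g)) (.add (.add e f) g)
  | seqAssoc (e f g) : KACong H (.seq e (.seq f g)) (.seq (.seq e f) g)
  | seqDistL (e f g) : KACong H (.seq e (.add f g)) (.add (.seq e f) (.seq e g))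
  | seqDistR (e f g) : KACong H (.seq (.add e f) g) (.add (.seq e g) (.seq f g))
  | seqOneR (e) : KACong H (.seq e .one) e
  | seqOneL (e) : KACong H (.seq .one e) e
  | seqZeroR (e) : KACong H (.seq e .zero) .zero
  | seqZeroL (e) : KACong H (.seq .zero e) .zero
  | starUnfoldL (e) : KACong H (.add .one (.seq e (.star e))) (.star e)
  | starUnfoldR (e) : KACong H (.add .one (.seq (.star e) e)) (.star e)
  | lfpL {e f g} : KACong H (.add (.add e (.seq f g)) g) g →
      KACong H (.add (.seq (.star f) e) g) g
  | lfpR {e f g} : KACong H (.add (.add e (.seq f g)) f) f →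
      KACong H (.add (.seq e (.star g)) f) f
  | hyp {e f} : (e, f) ∈ H → KACong H (.add e f) f

/-- A sequential reduction from `H` to `H'`. -/
structure IsSeqReduction {A : Type} (H H' : HypSet A) (r : Term A → Term A) : Prop where
  implies : Implies H H'
  equiv : ∀ e : Term A, e.noPar → KACong H e (r e)
  closure_eq : ∀ e : Term A, e.noPar → seqCl H e.lang = seqCl H' (r e).lang

/-- Extension of a map on (KA) terms to all CKA terms, homomorphically on `∥`. -/
def parExt {A : Type} (r : Term A → Term A) : Term A → Term A
  | .par e f => .par (parExt r e) (parExt r f)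
  | e => r e

/-! ### Inductive characterisation of sp contexts -/

/-- The generators of series-parallel contexts (Lemma: `PC^sp` is the smallest such set). -/
inductive GenCtx {A : Type} : Pomset (Option A) → Prop
  | star : GenCtx (Pomset.single (none : Option A))
  | seqL {U : Pomset A} {C} : U.IsSP → GenCtx C → GenCtx (Pomset.seq (Pomset.map some U) C)
  | seqR {C} {V : Pomset A} : GenCtx C → V.IsSP → GenCtx (Pomset.seq C (Pomset.map some V))
  | par {U : Pomset A} {C} : U.IsSP → GenCtx C → GenCtx (Pomset.par (Pomset.map some U) C)

/-! ### Reification -/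

/-- Homomorphic extension of a letter map to terms. -/
def rTerm {A : Type} (r : A → Term A) : Term A → Term A
  | .zero => .zero
  | .one => .one
  | .var a => r a
  | .add e f => .add (rTerm r e) (rTerm r f)
  | .seq e f => .seq (rTerm r e) (rTerm r f)
  | .par e f => .par (rTerm r e) (rTerm r f)
  | .star e => .star (rTerm r e)

/-- All letters of a term lie in `Γ`. -/
def TermOver {A : Type} (Γ : Set A) : Term A → Prop
  | .zero => True
  | .one => True
  | .var a => a ∈ Γ
  | .add e f => TermOver Γ e ∧ TermOver Γ f
  | .seq e f => TermOver Γ e ∧ TermOver Γ f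
  | .par e f => TermOver Γ e ∧ TermOver Γ f
  | .star e => TermOver Γ e

/-- Extension of a letter map `r` to (series-parallel) pomsets, as a relation:
`rMap r U V` means `V ∈ r(U)`. -/
inductive rMap {A : Type} (r : A → Term A) : Pomset A → Pomset A → Prop
  | one : rMap r (Pomset.empty A) (Pomset.empty A)
  | var (a : A) {V} : V ∈ (r a).lang → rMap r (Pomset.single a) V
  | seq {U U' V V'} : rMap r U V → rMap r U' V' →
      rMap r (Pomset.seq U U') (Pomset.seq V V')
  | par {U U' V V'} : rMap r U V → rMap r U' V' →
      rMap r (Pomset.par U U') (Pomset.par V V')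

/-- Image of a language under (the pomset extension of) `r`. -/
def rImg {A : Type} (r : A → Term A) (L : Lang A) : Lang A := {V | ∃ U ∈ L, rMap r U V}

/-- Series-parallel pomsets over the subalphabet `Γ`. -/
def SPover {A : Type} (Γ : Set A) : Lang A := {U | U.IsSP ∧ U.Over Γ}

/-- `r : Σ → Term Γ` is a reification from `H` to `H'`. -/
structure IsReification {A : Type} (Γ : Set A) (H H' : HypSet A) (r : A → Term A) : Prop where
  toGamma : ∀ a : A, TermOver Γ (r a)
  equiv : ∀ a : A, CongH H (r a) (.var a)
  expansive : ∀ a ∈ Γ, LeH (∅ : HypSet A) (.var a) (r a)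
  preserves : ∀ L : Lang A, L ⊆ SPover Γ → cl H' L ⊆ SPover Γ
  hyps : ∀ p ∈ H, LeH H' (rTerm r p.1) (rTerm r p.2)


/-! ### Generalised substitution -/

/-- Lexicographic sum of a family of labelled posets along a poset. -/
def subP {A : Type} (P : Type) [Fintype P] [PartialOrder P] (v : P → LPoset A) : LPoset A where
  carrier := Σₗ p, (v p).carrier
  fin := inferInstanceAs (Fintype (Σ p, (v p).carrier))
  lab := fun x => (v (ofLex x).1).lab (ofLex x).2

section subP
variable {A : Type} {P : Type} [Fintype P] [PartialOrder P]

/-- Constructor for points of a lexicographic sum. -/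
def subP.mk (v : P → LPoset A) (p : P) (y : (v p).carrier) : (subP P v).carrier :=
  toLex ⟨p, y⟩

/-- Index of a point of a lexicographic sum. -/
def subP.idx {v : P → LPoset A} (x : (subP P v).carrier) : P := (ofLex x).1

/-- Second component of a point of a lexicographic sum. -/
def subP.snd {v : P → LPoset A} (x : (subP P v).carrier) : (v (subP.idx x)).carrier := (ofLex x).2

theorem subP.exists_mk {v : P → LPoset A} (x : (subP P v).carrier) :
    ∃ p y, x = subP.mk v p y := ⟨(ofLex x).1, (ofLex x).2, rfl⟩

theorem subP.idx_mk (v : P → LPoset A) (p : P) (y) : subP.idx (subP.mk v p y) = p := rfl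

theorem subP.lab_mk (v : P → LPoset A) (p : P) (y) :
    (subP P v).lab (subP.mk v p y) = (v p).lab y := rfl

theorem subP.le_same {v : P → LPoset A} {p : P} (y z : (v p).carrier) :
    subP.mk v p y ≤ subP.mk v p z ↔ y ≤ z := by
  refine (Sigma.lex_iff (r := (· < ·)) (s := fun i => ((· ≤ ·) : (v i).carrier → _ → Prop))
    (a := ⟨p, y⟩) (b := ⟨p, z⟩)).trans ?_
  simp

theorem subP.le_ne {v : P → LPoset A} {p q : P} (h : p ≠ q) (y : (v p).carrier)
    (z : (v q).carrier) : subP.mk v p y ≤ subP.mk v q z ↔ p ≤ q := by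
  refine (Sigma.lex_iff (r := (· < ·)) (s := fun i => ((· ≤ ·) : (v i).carrier → _ → Prop))
    (a := ⟨p, y⟩) (b := ⟨q, z⟩)).trans ?_
  simp [h, le_iff_lt_or_eq]

theorem subP.mk_inj {v : P → LPoset A} {p : P} {y z : (v p).carrier}
    (h : subP.mk v p y = subP.mk v p z) : y = z :=
  le_antisymm ((subP.le_same y z).1 h.le) ((subP.le_same z y).1 h.ge)

theorem iso_subP (v : P → LPoset A) (w : LPoset A) (f : w.carrier → P)
    (hord : ∀ z z', f z ≠ f z' → (z ≤ z' ↔ f z ≤ f z'))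
    (hj : ∀ p, ∃ j : (v p).carrier → w.carrier, (∀ y y', j y ≤ j y' ↔ y ≤ y') ∧
      (∀ y, w.lab (j y) = (v p).lab y) ∧ (∀ y, f (j y) = p) ∧ ∀ z, f z = p → ∃ y, j y = z) :
    LPoset.Iso (subP P v) w := by
  choose j hle hlab hf hsurj using hj
  let F : (subP P v).carrier → w.carrier := fun x => j (ofLex x).1 (ofLex x).2
  have hF : ∀ p y, F (subP.mk v p y) = j p y := fun _ _ => rfl
  have hFle : ∀ a b, F a ≤ F b ↔ a ≤ b := by
    intro a b
    obtain ⟨p, y, rfl⟩ := subP.exists_mk a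
    obtain ⟨q, z, rfl⟩ := subP.exists_mk b
    rw [hF, hF]
    by_cases h : p = q
    · subst h
      rw [hle, subP.le_same]
    · rw [subP.le_ne h, hord _ _ (by rw [hf, hf]; exact h), hf, hf]
  have hb : Function.Bijective F := by
    constructor
    · intro a b hab
      exact le_antisymm ((hFle a b).1 hab.le) ((hFle b a).1 hab.ge)
    · intro z
      obtain ⟨y, hy⟩ := hsurj (f z) z rfl
      exact ⟨subP.mk v (f z) y, hy⟩
  refine ⟨{ toEquiv := Equiv.ofBijective F hb, map_rel_iff' := fun {a b} => hFle a b }, ?_⟩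
  intro x
  exact hlab _ _

end subP

theorem LPoset.Iso.refl {A : Type} (u : LPoset A) : LPoset.Iso u u :=
  (LPoset.iso_equivalence A).refl u
theorem LPoset.Iso.symm {A : Type} {u v : LPoset A} (h : LPoset.Iso u v) : LPoset.Iso v u :=
  (LPoset.iso_equivalence A).symm h
theorem LPoset.Iso.trans {A : Type} {u v w : LPoset A} (h : LPoset.Iso u v)
    (h' : LPoset.Iso v w) : LPoset.Iso u w :=
  (LPoset.iso_equivalence A).trans h h'

section alg
variable {A : Type}

theorem subP_congr {P Q : Type} [Fintype P] [PartialOrder P] [Fintype Q] [PartialOrder Q]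
    (e : P ≃o Q) (v : P → LPoset A) (v' : Q → LPoset A)
    (h : ∀ p, LPoset.Iso (v p) (v' (e p))) : LPoset.Iso (subP P v) (subP Q v') := by
  refine iso_subP v (subP Q v') (fun z => e.symm (subP.idx z)) ?_ ?_
  · intro a b hab
    obtain ⟨p, y, rfl⟩ := subP.exists_mk a
    obtain ⟨q, z, rfl⟩ := subP.exists_mk b
    simp only [subP.idx_mk] at hab ⊢
    rw [subP.le_ne (fun h => hab (by rw [h]))]
    exact e.symm.le_iff_le.symm
  · intro p
    obtain ⟨g, hg⟩ := h p
    refine ⟨fun y => subP.mk v' (e p) (g y), ?_, ?_, ?_, ?_⟩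
    · intro y y'
      rw [subP.le_same]
      exact g.le_iff_le
    · intro y; exact hg y
    · intro y; simp [subP.idx_mk]
    · intro z hz
      obtain ⟨q, y, rfl⟩ := subP.exists_mk z
      rw [subP.idx_mk] at hz
      have : q = e p := by rw [← hz]; simp
      subst this
      exact ⟨g.symm y, by simp⟩

theorem subP_congr' {P : Type} [Fintype P] [PartialOrder P]
    (v v' : P → LPoset A)
    (h : ∀ p, LPoset.Iso (v p) (v' p)) : LPoset.Iso (subP P v) (subP P v') :=
  subP_congr (OrderIso.refl P) v v' h

theorem subP_single (u : LPoset A) :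
    LPoset.Iso (subP u.carrier (fun x => LPoset.singleL (u.lab x))) u := by
  refine iso_subP _ u id ?_ ?_
  · intro a b hab
    exact Iff.rfl
  · intro p
    refine ⟨fun _ => p, ?_, ?_, ?_, ?_⟩
    · intro y y'; exact ⟨fun _ => le_refl _, fun _ => le_refl _⟩
    · intro y; rfl
    · intro y; rfl
    · intro z hz; exact ⟨PUnit.unit, hz.symm⟩

theorem subP_punit (v : PUnit → LPoset A) : LPoset.Iso (subP PUnit v) (v PUnit.unit) := by
  refine iso_subP _ _ (fun _ => PUnit.unit) ?_ ?_
  · intro a b hab; exact absurd rfl hab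
  · intro p
    exact ⟨id, fun _ _ => Iff.rfl, fun _ => rfl, fun _ => rfl, fun z _ => ⟨z, rfl⟩⟩

theorem subP_empty (v : Fin 0 → LPoset A) : LPoset.Iso (subP (Fin 0) v) (LPoset.emptyL A) := by
  refine iso_subP _ _ (fun x => x) ?_ ?_
  · intro a b hab; exact Fin.elim0 a
  · intro p; exact p.elim0

section cons
variable {u v : LPoset A}
/-- Left injection into a sequential composition. -/
def sl (a : u.carrier) : (u.seqL v).carrier := Sum.inlₗ a
/-- Right injection into a sequential composition. -/
def sr (a : v.carrier) : (u.seqL v).carrier := Sum.inrₗ a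
/-- Left injection into a parallel composition. -/
def pl (a : u.carrier) : (u.parL v).carrier := Sum.inl a
/-- Right injection into a parallel composition. -/
def pr (a : v.carrier) : (u.parL v).carrier := Sum.inr a
theorem s_cases (x : (u.seqL v).carrier) : (∃ a, x = sl a) ∨ ∃ b, x = sr b := by
  rcases x with a | b
  · exact Or.inl ⟨a, rfl⟩
  · exact Or.inr ⟨b, rfl⟩
theorem p_cases (x : (u.parL v).carrier) : (∃ a, x = pl a) ∨ ∃ b, x = pr b := by
  rcases x with a | b
  · exact Or.inl ⟨a, rfl⟩
  · exact Or.inr ⟨b, rfl⟩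
theorem sll (a b : u.carrier) : (sl a : (u.seqL v).carrier) ≤ sl b ↔ a ≤ b :=
  Sum.Lex.inl_le_inl_iff
theorem srr (a b : v.carrier) : (sr a : (u.seqL v).carrier) ≤ sr b ↔ a ≤ b :=
  Sum.Lex.inr_le_inr_iff
theorem slr (a : u.carrier) (b : v.carrier) : (sl a : (u.seqL v).carrier) ≤ sr b ↔ True :=
  iff_true_intro (Sum.Lex.inl_le_inr _ _)
theorem srl (a : v.carrier) (b : u.carrier) : (sr a : (u.seqL v).carrier) ≤ sl b ↔ False :=
  iff_false_intro Sum.Lex.not_inr_le_inl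
theorem pll (a b : u.carrier) : (pl a : (u.parL v).carrier) ≤ pl b ↔ a ≤ b :=
  Sum.inl_le_inl_iff
theorem prr (a b : v.carrier) : (pr a : (u.parL v).carrier) ≤ pr b ↔ a ≤ b :=
  Sum.inr_le_inr_iff
theorem plr (a : u.carrier) (b : v.carrier) : (pl a : (u.parL v).carrier) ≤ pr b ↔ False :=
  iff_false_intro Sum.not_inl_le_inr
theorem prl (a : v.carrier) (b : u.carrier) : (pr a : (u.parL v).carrier) ≤ pl b ↔ False :=
  iff_false_intro Sum.not_inr_le_inl
theorem sl_inj {a b : u.carrier} (h : (sl a : (u.seqL v).carrier) = sl b) : a = b :=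
  le_antisymm ((sll a b).1 h.le) ((sll b a).1 h.ge)
theorem sr_inj {a b : v.carrier} (h : (sr a : (u.seqL v).carrier) = sr b) : a = b :=
  le_antisymm ((srr a b).1 h.le) ((srr b a).1 h.ge)
theorem pl_inj {a b : u.carrier} (h : (pl a : (u.parL v).carrier) = pl b) : a = b :=
  le_antisymm ((pll a b).1 h.le) ((pll b a).1 h.ge)
theorem pr_inj {a b : v.carrier} (h : (pr a : (u.parL v).carrier) = pr b) : a = b :=
  le_antisymm ((prr a b).1 h.le) ((prr b a).1 h.ge)
theorem sl_ne {a : u.carrier} {b : v.carrier} : (sl a : (u.seqL v).carrier) ≠ sr b := by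
  intro h; cases h
theorem pl_ne {a : u.carrier} {b : v.carrier} : (pl a : (u.parL v).carrier) ≠ pr b := by
  intro h; cases h
end cons

theorem subP_seqL (u v : LPoset A) {B : Type} (w : (u.seqL v).carrier → LPoset B) :
    LPoset.Iso (subP (u.seqL v).carrier w)
      (LPoset.seqL (subP u.carrier (fun x => w (sl x)))
        (subP v.carrier (fun x => w (sr x)))) := by
  let π : (LPoset.seqL (subP u.carrier (fun x => w (sl x)))
        (subP v.carrier (fun x => w (sr x)))).carrier → (u.seqL v).carrier :=
    fun z => Sum.elim (fun a => sl (subP.idx a)) (fun a => sr (subP.idx a)) (ofLex z)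
  have hl : ∀ a, π (sl a) = sl (subP.idx a) := fun _ => rfl
  have hr : ∀ a, π (sr a) = sr (subP.idx a) := fun _ => rfl
  refine iso_subP _ _ π ?_ ?_
  · intro a b hab
    rcases s_cases a with ⟨a, rfl⟩ | ⟨a, rfl⟩ <;>
    rcases s_cases b with ⟨b, rfl⟩ | ⟨b, rfl⟩ <;>
    obtain ⟨p, y, rfl⟩ := subP.exists_mk a <;>
    obtain ⟨q, z, rfl⟩ := subP.exists_mk b <;>
    simp only [hl, hr, subP.idx_mk] at hab ⊢
    · have h' : p ≠ q := fun h => hab (by subst h; rfl)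
      rw [sll, sll, subP.le_ne h']
    · rw [slr, slr]
    · rw [srl, srl]
    · have h' : p ≠ q := fun h => hab (by subst h; rfl)
      rw [srr, srr, subP.le_ne h']
  · intro p
    rcases s_cases p with ⟨p, rfl⟩ | ⟨p, rfl⟩
    · refine ⟨fun y => sl (subP.mk (fun x => w (sl x)) p y), ?_, ?_, ?_, ?_⟩
      · intro y y'
        rw [sll, subP.le_same]
      · intro y; rfl
      · intro y; rfl
      · intro z hz
        rcases s_cases z with ⟨a, rfl⟩ | ⟨a, rfl⟩ <;>
        obtain ⟨q, y, rfl⟩ := subP.exists_mk a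
        · have : q = p := sl_inj hz
          subst this
          exact ⟨y, rfl⟩
        · exact absurd hz.symm sl_ne
    · refine ⟨fun y => sr (subP.mk (fun x => w (sr x)) p y), ?_, ?_, ?_, ?_⟩
      · intro y y'
        rw [srr, subP.le_same]
      · intro y; rfl
      · intro y; rfl
      · intro z hz
        rcases s_cases z with ⟨a, rfl⟩ | ⟨a, rfl⟩ <;>
        obtain ⟨q, y, rfl⟩ := subP.exists_mk a
        · exact absurd hz sl_ne
        · have : q = p := sr_inj hz
          subst this
          exact ⟨y, rfl⟩

theorem subP_parL (u v : LPoset A) {B : Type} (w : (u.parL v).carrier → LPoset B) :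
    LPoset.Iso (subP (u.parL v).carrier w)
      (LPoset.parL (subP u.carrier (fun x => w (pl x)))
        (subP v.carrier (fun x => w (pr x)))) := by
  let π : (LPoset.parL (subP u.carrier (fun x => w (pl x)))
        (subP v.carrier (fun x => w (pr x)))).carrier → (u.parL v).carrier :=
    fun z => Sum.elim (fun a => pl (subP.idx a)) (fun a => pr (subP.idx a)) z
  have hl : ∀ a, π (pl a) = pl (subP.idx a) := fun _ => rfl
  have hr : ∀ a, π (pr a) = pr (subP.idx a) := fun _ => rfl
  refine iso_subP _ _ π ?_ ?_
  · intro a b hab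
    rcases p_cases a with ⟨a, rfl⟩ | ⟨a, rfl⟩ <;>
    rcases p_cases b with ⟨b, rfl⟩ | ⟨b, rfl⟩ <;>
    obtain ⟨p, y, rfl⟩ := subP.exists_mk a <;>
    obtain ⟨q, z, rfl⟩ := subP.exists_mk b <;>
    simp only [hl, hr, subP.idx_mk] at hab ⊢
    · have h' : p ≠ q := fun h => hab (by subst h; rfl)
      rw [pll, pll, subP.le_ne h']
    · rw [plr, plr]
    · rw [prl, prl]
    · have h' : p ≠ q := fun h => hab (by subst h; rfl)
      rw [prr, prr, subP.le_ne h']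
  · intro p
    rcases p_cases p with ⟨p, rfl⟩ | ⟨p, rfl⟩
    · refine ⟨fun y => pl (subP.mk (fun x => w (pl x)) p y), ?_, ?_, ?_, ?_⟩
      · intro y y'
        rw [pll, subP.le_same]
      · intro y; rfl
      · intro y; rfl
      · intro z hz
        rcases p_cases z with ⟨a, rfl⟩ | ⟨a, rfl⟩ <;>
        obtain ⟨q, y, rfl⟩ := subP.exists_mk a
        · have : q = p := pl_inj hz
          subst this
          exact ⟨y, rfl⟩
        · exact absurd hz.symm pl_ne
    · refine ⟨fun y => pr (subP.mk (fun x => w (pr x)) p y), ?_, ?_, ?_, ?_⟩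
      · intro y y'
        rw [prr, subP.le_same]
      · intro y; rfl
      · intro y; rfl
      · intro z hz
        rcases p_cases z with ⟨a, rfl⟩ | ⟨a, rfl⟩ <;>
        obtain ⟨q, y, rfl⟩ := subP.exists_mk a
        · exact absurd hz pl_ne
        · have : q = p := pr_inj hz
          subst this
          exact ⟨y, rfl⟩

theorem subP_assoc {P : Type} [Fintype P] [PartialOrder P] {B : Type}
    (v : P → LPoset A) (w : (subP P v).carrier → LPoset B) :
    LPoset.Iso (subP (subP P v).carrier w)
      (subP P (fun p => subP (v p).carrier (fun y => w (subP.mk v p y)))) := by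
  apply LPoset.Iso.symm
  refine iso_subP _ _ (fun z => subP.idx (subP.idx z)) ?_ ?_
  · intro a b hab
    obtain ⟨p, y, rfl⟩ := subP.exists_mk a
    obtain ⟨q, z, rfl⟩ := subP.exists_mk b
    simp only [subP.idx_mk] at hab ⊢
    rw [subP.le_ne (fun h => hab (by rw [h]))]
    obtain ⟨p, y', rfl⟩ := subP.exists_mk p
    obtain ⟨q, z', rfl⟩ := subP.exists_mk q
    simp only [subP.idx_mk] at hab ⊢
    rw [subP.le_ne hab]
  · intro p
    refine ⟨fun t => subP.mk w (subP.mk v p (subP.idx t)) (subP.snd t), ?_, ?_, ?_, ?_⟩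
    · intro a b
      obtain ⟨y, s, rfl⟩ := subP.exists_mk a
      obtain ⟨z, t, rfl⟩ := subP.exists_mk b
      show subP.mk w (subP.mk v p y) s ≤ subP.mk w (subP.mk v p z) t ↔ _
      by_cases h : y = z
      · subst h
        rw [subP.le_same, subP.le_same]
      · rw [subP.le_ne h, subP.le_ne (fun h' => h (subP.mk_inj h')), subP.le_same]
    · intro y; rfl
    · intro y; rfl
    · intro z hz
      obtain ⟨q, t, rfl⟩ := subP.exists_mk z
      obtain ⟨q, y, rfl⟩ := subP.exists_mk q
      simp only [subP.idx_mk] at hz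
      subst hz
      exact ⟨subP.mk (fun y => w (subP.mk v q y)) y t, rfl⟩

/-- Injection of context points into an insertion. -/
def il {c : LPoset (Option A)} {u : LPoset A} (x : c.carrier) (h : c.lab x ≠ none) :
    (c.insL u).carrier := Sum.inl ⟨x, h⟩
/-- Injection of inserted points into an insertion. -/
def ir {c : LPoset (Option A)} {u : LPoset A} (x : u.carrier) : (c.insL u).carrier := Sum.inr x
theorem ins_cases {c : LPoset (Option A)} {u : LPoset A} (x : (c.insL u).carrier) :
    (∃ a h, x = il a h) ∨ ∃ b, x = ir b := by
  rcases x with ⟨a, h⟩ | b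
  · exact Or.inl ⟨a, h, rfl⟩
  · exact Or.inr ⟨b, rfl⟩
theorem ir_inj {c : LPoset (Option A)} {u : LPoset A} {x y : u.carrier}
    (h : (ir x : (c.insL u).carrier) = ir y) : x = y := Sum.inr.inj h

theorem subP_insL {B : Type} (c : LPoset (Option A)) (hc : c.uniqueStarL) (u : LPoset A)
    (w : (c.insL u).carrier → LPoset B) :
    LPoset.Iso (subP (c.insL u).carrier w)
      (subP c.carrier (fun x => if h : c.lab x = none then
        subP u.carrier (fun y => w (ir y)) else w (il x h))) := by
  apply LPoset.Iso.symm
  obtain ⟨s, hs, hus⟩ := id hc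
  have hne : ∀ x : {x : c.carrier // c.lab x ≠ none}, x.val ≠ s := fun x h => x.2 (h ▸ hs)
  have hll : ∀ x y, (@LE.le (c.insL u).carrier _ (Sum.inl x) (Sum.inl y)) ↔ x.val ≤ y.val :=
    fun x y => Iff.rfl
  have hrr : ∀ x y, (ir x : (c.insL u).carrier) ≤ ir y ↔ x ≤ y :=
    fun x y => Iff.rfl
  have hlr : ∀ x y, (@LE.le (c.insL u).carrier _ (Sum.inl x) (Sum.inr y)) ↔ x.val ≤ s := by
    intro x y
    show (c.uniqueStarL ∧ ∃ s, c.lab s = none ∧ x.val ≤ s) ↔ _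
    constructor
    · rintro ⟨-, t, ht, h⟩; rwa [← hus t ht]
    · intro h; exact ⟨hc, s, hs, h⟩
  have hrl : ∀ x y, (@LE.le (c.insL u).carrier _ (Sum.inr x) (Sum.inl y)) ↔ s ≤ y.val := by
    intro x y
    show (c.uniqueStarL ∧ ∃ s, c.lab s = none ∧ s ≤ y.val) ↔ _
    constructor
    · rintro ⟨-, t, ht, h⟩; rwa [← hus t ht]
    · intro h; exact ⟨hc, s, hs, h⟩
  let π : (c.insL u).carrier → c.carrier := Sum.elim (fun x => x.val) (fun _ => s)
  have hπl : ∀ x, π (Sum.inl x) = x.val := fun _ => rfl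
  have hπr : ∀ x, π (Sum.inr x) = s := fun _ => rfl
  have hπle : ∀ a b, π a ≠ π b → (a ≤ b ↔ π a ≤ π b) := by
    rintro (a | a) (b | b) hab
    · exact hll a b
    · exact hlr a b
    · exact hrl a b
    · exact absurd rfl hab
  refine iso_subP _ _ (fun z => π (subP.idx z)) ?_ ?_
  · intro a b hab
    obtain ⟨p, y, rfl⟩ := subP.exists_mk a
    obtain ⟨q, z, rfl⟩ := subP.exists_mk b
    simp only [subP.idx_mk] at hab ⊢
    rw [subP.le_ne (fun h => hab (by rw [h])), hπle _ _ hab]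
  · intro p
    by_cases hp : c.lab p = none
    · rw [dif_pos hp]
      have hps : p = s := hus p hp
      refine ⟨fun t => subP.mk w (ir (subP.idx t)) (subP.snd t), ?_, ?_, ?_, ?_⟩
      · intro a b
        obtain ⟨y, s, rfl⟩ := subP.exists_mk a
        obtain ⟨z, t, rfl⟩ := subP.exists_mk b
        show subP.mk w (ir y) s ≤ subP.mk w (ir z) t ↔ _
        by_cases h : y = z
        · subst h
          rw [subP.le_same, subP.le_same]
        · rw [subP.le_ne h, subP.le_ne (fun h' => h (ir_inj h')), hrr]
      · intro y; rfl
      · intro y; exact hps.symm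
      · intro z hz
        obtain ⟨q, t, rfl⟩ := subP.exists_mk z
        rw [subP.idx_mk] at hz
        rcases q with q | q
        · exact absurd (hz.trans hps) (hne q)
        · exact ⟨subP.mk (fun y => w (ir y)) q t, rfl⟩
    · rw [dif_neg hp]
      refine ⟨fun t => subP.mk w (il p hp) t, ?_, ?_, ?_, ?_⟩
      · intro a b; exact subP.le_same _ _
      · intro y; rfl
      · intro y; rfl
      · intro z hz
        obtain ⟨q, t, rfl⟩ := subP.exists_mk z
        rw [subP.idx_mk] at hz
        rcases q with q | q
        · obtain ⟨q, hq⟩ := q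
          have : q = p := hz
          subst this
          exact ⟨t, rfl⟩
        · exact absurd hs (by rw [show s = p from hz]; exact hp)

end alg

/-! ### Pomset-level algebra -/

section pom
variable {A : Type}

/-- The pomset of a labelled poset. -/
def mkP (u : LPoset A) : Pomset A := Quotient.mk (pomSetoid A) u

theorem mkP_eq {u v : LPoset A} : mkP u = mkP v ↔ LPoset.Iso u v :=
  ⟨fun h => Quotient.exact h, fun h => Quotient.sound h⟩

theorem exists_mkP (U : Pomset A) : ∃ u, mkP u = U := Quotient.exists_rep U

theorem mkP_seq (u v : LPoset A) : Pomset.seq (mkP u) (mkP v) = mkP (u.seqL v) := rfl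
theorem mkP_par (u v : LPoset A) : Pomset.par (mkP u) (mkP v) = mkP (u.parL v) := rfl
theorem mkP_ins (c : LPoset (Option A)) (u : LPoset A) :
    Pomset.ins (mkP c) (mkP u) = mkP (c.insL u) := rfl

theorem iso_of_surj {u v : LPoset A} (g : u.carrier → v.carrier)
    (hle : ∀ x y, g x ≤ g y ↔ x ≤ y) (hlab : ∀ x, v.lab (g x) = u.lab x)
    (hs : Function.Surjective g) : LPoset.Iso u v := by
  have hb : Function.Bijective g :=
    ⟨fun a b h => le_antisymm ((hle a b).1 h.le) ((hle b a).1 h.ge), hs⟩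
  exact ⟨{ toEquiv := Equiv.ofBijective g hb, map_rel_iff' := fun {a b} => hle a b }, hlab⟩

theorem seq_assoc (U V W : Pomset A) :
    Pomset.seq U (Pomset.seq V W) = Pomset.seq (Pomset.seq U V) W := by
  obtain ⟨u, rfl⟩ := exists_mkP U
  obtain ⟨v, rfl⟩ := exists_mkP V
  obtain ⟨w, rfl⟩ := exists_mkP W
  refine (mkP_eq.2 ⟨(OrderIso.sumLexAssoc u.carrier v.carrier w.carrier), ?_⟩).symm
  rintro ((x | x) | x) <;> rfl

theorem par_assoc (U V W : Pomset A) :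
    Pomset.par U (Pomset.par V W) = Pomset.par (Pomset.par U V) W := by
  obtain ⟨u, rfl⟩ := exists_mkP U
  obtain ⟨v, rfl⟩ := exists_mkP V
  obtain ⟨w, rfl⟩ := exists_mkP W
  refine (mkP_eq.2 ⟨(OrderIso.sumAssoc u.carrier v.carrier w.carrier), ?_⟩).symm
  rintro ((x | x) | x) <;> rfl

theorem par_comm (U V : Pomset A) : Pomset.par U V = Pomset.par V U := by
  obtain ⟨u, rfl⟩ := exists_mkP U
  obtain ⟨v, rfl⟩ := exists_mkP V
  refine (mkP_eq.2 ⟨(OrderIso.sumComm u.carrier v.carrier), ?_⟩)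
  rintro (x | x) <;> rfl

theorem seq_one (U : Pomset A) : Pomset.seq U (Pomset.empty A) = U := by
  obtain ⟨u, rfl⟩ := exists_mkP U
  refine (mkP_eq.2 (iso_of_surj (v := u.seqL (LPoset.emptyL A)) sl (fun _ _ => sll _ _)
    (fun _ => rfl) ?_)).symm
  intro x
  rcases s_cases x with ⟨a, rfl⟩ | ⟨a, rfl⟩
  · exact ⟨a, rfl⟩
  · exact Fin.elim0 a

theorem one_seq (U : Pomset A) : Pomset.seq (Pomset.empty A) U = U := by
  obtain ⟨u, rfl⟩ := exists_mkP U
  refine (mkP_eq.2 (iso_of_surj (v := (LPoset.emptyL A).seqL u) sr (fun _ _ => srr _ _)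
    (fun _ => rfl) ?_)).symm
  intro x
  rcases s_cases x with ⟨a, rfl⟩ | ⟨a, rfl⟩
  · exact Fin.elim0 a
  · exact ⟨a, rfl⟩

theorem par_one (U : Pomset A) : Pomset.par U (Pomset.empty A) = U := by
  obtain ⟨u, rfl⟩ := exists_mkP U
  refine (mkP_eq.2 (iso_of_surj (v := u.parL (LPoset.emptyL A)) pl (fun _ _ => pll _ _)
    (fun _ => rfl) ?_)).symm
  intro x
  rcases p_cases x with ⟨a, rfl⟩ | ⟨a, rfl⟩
  · exact ⟨a, rfl⟩
  · exact Fin.elim0 a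

/-! ### Series-parallel contexts -/

theorem subP_of_iso {B : Type} {c c' : LPoset A} (h : LPoset.Iso c c')
    (v : c.carrier → LPoset B) : ∃ e : c'.carrier ≃o c.carrier,
      (∀ x, c.lab (e x) = c'.lab x) ∧
      LPoset.Iso (subP c.carrier v) (subP c'.carrier (fun x => v (e x))) := by
  obtain ⟨e, he⟩ := h.symm
  refine ⟨e, he, LPoset.Iso.symm (subP_congr e _ _ fun p => LPoset.Iso.refl _)⟩

theorem isSP_subP {B : Type} {U : Pomset A} (hU : U.IsSP) : ∀ c : LPoset A, mkP c = U →
    ∀ v : c.carrier → LPoset B, (∀ x, (mkP (v x)).IsSP) → (mkP (subP c.carrier v)).IsSP := by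
  induction hU with
  | empty =>
    intro c hc v hv
    obtain ⟨e, -, h⟩ := subP_of_iso (c' := LPoset.emptyL A) (mkP_eq.1 hc) v
    rw [mkP_eq.2 h, show mkP (subP (LPoset.emptyL A).carrier fun x => v (e x)) =
      mkP (LPoset.emptyL B) from mkP_eq.2 (subP_empty fun x => v (e x))]
    exact Pomset.IsSP.empty
  | single a =>
    intro c hc v hv
    obtain ⟨e, -, h⟩ := subP_of_iso (c' := LPoset.singleL a) (mkP_eq.1 hc) v
    rw [mkP_eq.2 h, show mkP (subP (LPoset.singleL a).carrier fun x => v (e x)) =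
      mkP (v (e PUnit.unit)) from mkP_eq.2 (subP_punit fun x => v (e x))]
    exact hv _
  | @seq U V hU hV ihU ihV =>
    intro c hc v hv
    obtain ⟨u, rfl⟩ := exists_mkP U
    obtain ⟨u', rfl⟩ := exists_mkP V
    obtain ⟨e, -, h⟩ := subP_of_iso (c' := u.seqL u') (mkP_eq.1 hc) v
    rw [mkP_eq.2 h, mkP_eq.2 (subP_seqL u u' _), ← mkP_seq]
    exact Pomset.IsSP.seq (ihU u rfl _ fun _ => hv _) (ihV u' rfl _ fun _ => hv _)
  | @par U V hU hV ihU ihV =>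
    intro c hc v hv
    obtain ⟨u, rfl⟩ := exists_mkP U
    obtain ⟨u', rfl⟩ := exists_mkP V
    obtain ⟨e, -, h⟩ := subP_of_iso (c' := u.parL u') (mkP_eq.1 hc) v
    rw [mkP_eq.2 h, mkP_eq.2 (subP_parL u u' _), ← mkP_par]
    exact Pomset.IsSP.par (ihU u rfl _ fun _ => hv _) (ihV u' rfl _ fun _ => hv _)

/-- Insertion into a context, via lexicographic sums. -/
def plug (d : LPoset (Option A)) (u : LPoset A) : LPoset A :=
  subP d.carrier (fun y => (d.lab y).elim u LPoset.singleL)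

theorem insL_plug (c : LPoset (Option A)) (hc : c.uniqueStarL) (u : LPoset A) :
    LPoset.Iso (c.insL u) (plug c u) := by
  refine (subP_single _).symm.trans ((subP_insL c hc u _).trans (subP_congr' _ _ ?_))
  intro p
  by_cases hp : c.lab p = none
  · rw [dif_pos hp, hp]
    exact subP_single u
  · rw [dif_neg hp]
    obtain ⟨a, ha⟩ := Option.ne_none_iff_exists'.1 hp
    have : (c.insL u).lab (il p hp) = a := by
      show (c.lab p).get _ = a
      simp [ha]
    rw [this, ha]
    exact LPoset.Iso.refl _

theorem plug_subP {P : Type} [Fintype P] [PartialOrder P] (f : P → LPoset (Option A))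
    (u : LPoset A) : LPoset.Iso (plug (subP P f) u) (subP P (fun p => plug (f p) u)) :=
  subP_assoc f _

theorem plug_star (u : LPoset A) : LPoset.Iso (plug (LPoset.singleL none) u) u :=
  subP_punit _

theorem plug_some (a : A) (u : LPoset A) :
    LPoset.Iso (plug (LPoset.singleL (some a)) u) (LPoset.singleL a) :=
  subP_punit _

theorem plug_map (v u : LPoset A) : LPoset.Iso (plug (v.mapL some) u) v :=
  subP_single v

theorem isSP_map {v : LPoset A} (hv : (mkP v).IsSP) : (mkP (v.mapL some)).IsSP := by
  rw [← mkP_eq.2 (subP_single (v.mapL some))]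
  exact isSP_subP hv v rfl _ fun _ => Pomset.IsSP.single _

theorem isSPCtx_subP (c : LPoset (Option A)) (hc : c.uniqueStarL) (hsp : (mkP c).IsSP)
    (f : c.carrier → LPoset (Option A)) (hf : ∀ x, (mkP (f x)).IsSP)
    (h0 : ∀ x, c.lab x = none → (f x).uniqueStarL)
    (h1 : ∀ x, c.lab x ≠ none → ∀ y, (f x).lab y ≠ none) :
    (mkP (subP c.carrier f)).IsSPCtx ∧ ∀ u : LPoset A,
      (mkP (subP c.carrier f)).ins (mkP u) = mkP (subP c.carrier (fun x => plug (f x) u)) := by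
  have hu : (subP c.carrier f).uniqueStarL := by
    obtain ⟨s, hs, hus⟩ := hc
    obtain ⟨t, ht, hut⟩ := h0 s hs
    refine ⟨subP.mk f s t, ht, ?_⟩
    intro z hz
    obtain ⟨p, y, rfl⟩ := subP.exists_mk z
    by_cases hp : c.lab p = none
    · have := hus p hp
      subst this
      rw [hut y hz]
    · exact absurd hz (h1 p hp y)
  refine ⟨⟨hu, isSP_subP hsp c rfl f hf⟩, fun u => ?_⟩
  rw [mkP_ins, mkP_eq]
  exact (insL_plug _ hu u).trans (plug_subP f u)

theorem ctx_comp {D K : Pomset (Option A)} (hD : D.IsSPCtx) (hK : K.IsSPCtx) :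
    ∃ E : Pomset (Option A), E.IsSPCtx ∧ ∀ U, E.ins U = D.ins (K.ins U) := by
  obtain ⟨d, rfl⟩ := exists_mkP D
  obtain ⟨k, rfl⟩ := exists_mkP K
  obtain ⟨hE, hE'⟩ := isSPCtx_subP d hD.1 hD.2
    (fun x => if d.lab x = none then k else LPoset.singleL (d.lab x))
    (fun x => by
      by_cases h : d.lab x = none
      · rw [if_pos h]; exact hK.2
      · rw [if_neg h]; exact Pomset.IsSP.single _)
    (fun x h => by rw [if_pos h]; exact hK.1)
    (fun x h => by rw [if_neg h]; exact fun _ => h)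
  refine ⟨_, hE, fun U => ?_⟩
  obtain ⟨u, rfl⟩ := exists_mkP U
  rw [hE', mkP_ins, mkP_ins, mkP_eq]
  refine LPoset.Iso.trans ?_ (insL_plug d hD.1 _).symm
  refine subP_congr' _ _ fun p => ?_
  by_cases h : d.lab p = none
  · rw [if_pos h, h]
    exact (insL_plug k hK.1 u).symm
  · rw [if_neg h]
    obtain ⟨a, ha⟩ := Option.ne_none_iff_exists'.1 h
    rw [ha]
    exact plug_some a u

theorem plug_eq {k : LPoset (Option A)} (hk : k.uniqueStarL) (u : LPoset A) :
    (mkP k).ins (mkP u) = mkP (plug k u) := mkP_eq.2 (insL_plug k hk u)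

theorem ctx_seqR {V : Pomset A} (hV : V.IsSP) : ∃ K : Pomset (Option A), K.IsSPCtx ∧
    ∀ U, K.ins U = Pomset.seq U V := by
  obtain ⟨v, rfl⟩ := exists_mkP V
  have hu : ((LPoset.singleL none).seqL (v.mapL some)).uniqueStarL := by
    refine ⟨sl PUnit.unit, rfl, fun z hz => ?_⟩
    rcases s_cases z with ⟨a, rfl⟩ | ⟨a, rfl⟩
    · rfl
    · exact absurd hz (Option.some_ne_none _)
  refine ⟨mkP ((LPoset.singleL none).seqL (v.mapL some)),
    ⟨hu, Pomset.IsSP.seq (Pomset.IsSP.single _) (isSP_map hV)⟩, fun U => ?_⟩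
  obtain ⟨u, rfl⟩ := exists_mkP U
  rw [plug_eq hu]
  refine (mkP_eq.2 (subP_seqL _ _ _)).trans ?_
  rw [← mkP_seq]
  exact congrArg₂ _ (mkP_eq.2 (plug_star u)) (mkP_eq.2 (plug_map v u))

theorem ctx_seqL {V : Pomset A} (hV : V.IsSP) : ∃ K : Pomset (Option A), K.IsSPCtx ∧
    ∀ U, K.ins U = Pomset.seq V U := by
  obtain ⟨v, rfl⟩ := exists_mkP V
  have hu : ((v.mapL some).seqL (LPoset.singleL none)).uniqueStarL := by
    refine ⟨sr PUnit.unit, rfl, fun z hz => ?_⟩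
    rcases s_cases z with ⟨a, rfl⟩ | ⟨a, rfl⟩
    · exact absurd hz (Option.some_ne_none _)
    · rfl
  refine ⟨mkP ((v.mapL some).seqL (LPoset.singleL none)),
    ⟨hu, Pomset.IsSP.seq (isSP_map hV) (Pomset.IsSP.single _)⟩, fun U => ?_⟩
  obtain ⟨u, rfl⟩ := exists_mkP U
  rw [plug_eq hu]
  refine (mkP_eq.2 (subP_seqL _ _ _)).trans ?_
  rw [← mkP_seq]
  exact congrArg₂ _ (mkP_eq.2 (plug_map v u)) (mkP_eq.2 (plug_star u))

theorem ctx_parR {V : Pomset A} (hV : V.IsSP) : ∃ K : Pomset (Option A), K.IsSPCtx ∧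
    ∀ U, K.ins U = Pomset.par U V := by
  obtain ⟨v, rfl⟩ := exists_mkP V
  have hu : ((LPoset.singleL none).parL (v.mapL some)).uniqueStarL := by
    refine ⟨pl PUnit.unit, rfl, fun z hz => ?_⟩
    rcases p_cases z with ⟨a, rfl⟩ | ⟨a, rfl⟩
    · rfl
    · exact absurd hz (Option.some_ne_none _)
  refine ⟨mkP ((LPoset.singleL none).parL (v.mapL some)),
    ⟨hu, Pomset.IsSP.par (Pomset.IsSP.single _) (isSP_map hV)⟩, fun U => ?_⟩
  obtain ⟨u, rfl⟩ := exists_mkP U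
  rw [plug_eq hu]
  refine (mkP_eq.2 (subP_parL _ _ _)).trans ?_
  rw [← mkP_par]
  exact congrArg₂ _ (mkP_eq.2 (plug_star u)) (mkP_eq.2 (plug_map v u))

end pom

/-! ### Soundness -/

section sound
variable {A : Type}

theorem isSP_pow {L : Lang A} (hL : ∀ U ∈ L, U.IsSP) (n : ℕ) : ∀ U ∈ L.pow n, U.IsSP := by
  induction n with
  | zero => rintro U rfl; exact Pomset.IsSP.empty
  | succ n ih =>
    rintro _ ⟨U, hU, V, hV, rfl⟩
    exact Pomset.IsSP.seq (ih U hU) (hL V hV)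

theorem isSP_lang (e : Term A) : ∀ U ∈ e.lang, U.IsSP := by
  induction e with
  | zero => intro U hU; exact hU.elim
  | one => rintro U rfl; exact Pomset.IsSP.empty
  | var a => rintro U rfl; exact Pomset.IsSP.single a
  | add e f ihe ihf => rintro U (h | h); exacts [ihe U h, ihf U h]
  | seq e f ihe ihf =>
    rintro _ ⟨U, hU, V, hV, rfl⟩
    exact Pomset.IsSP.seq (ihe U hU) (ihf V hV)
  | par e f ihe ihf =>
    rintro _ ⟨U, hU, V, hV, rfl⟩
    exact Pomset.IsSP.par (ihe U hU) (ihf V hV)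
  | star e ih =>
    intro U hU
    obtain ⟨n, hn⟩ := Set.mem_iUnion.1 hU
    exact isSP_pow ih n U hn

/-- All elements are series-parallel. -/
def AllSP (L : Lang A) : Prop := ∀ U ∈ L, U.IsSP

theorem AllSP.seq {L M : Lang A} (hL : AllSP L) (hM : AllSP M) : AllSP (Lang.seq L M) := by
  rintro _ ⟨U, hU, V, hV, rfl⟩
  exact Pomset.IsSP.seq (hL U hU) (hM V hV)

/-- Contextual semantic containment. -/
def LeS (H : HypSet A) (L M : Lang A) : Prop :=
  ∀ D : Pomset (Option A), D.IsSPCtx → ∀ N : Lang A,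
    (∀ V ∈ M, D.ins V ∈ cl H N) → ∀ U ∈ L, D.ins U ∈ cl H N

variable {H : HypSet A} {L L' M M' K : Lang A}

theorem LeS.of_subset (h : L ⊆ M) : LeS H L M := fun _ _ _ hV U hU => hV U (h hU)

theorem LeS.trans (h : LeS H L M) (h' : LeS H M K) : LeS H L K :=
  fun D hD N hV => h D hD N (h' D hD N hV)

theorem LeS.union (h : LeS H L K) (h' : LeS H M K) : LeS H (L ∪ M) K := by
  rintro D hD N hV U (hU | hU)
  · exact h D hD N hV U hU
  · exact h' D hD N hV U hU

theorem LeS.seq_right (h : LeS H L L') (hM : AllSP M) :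
    LeS H (Lang.seq L M) (Lang.seq L' M) := by
  rintro D hD N hN _ ⟨U, hU, V, hV, rfl⟩
  obtain ⟨K, hK, hK'⟩ := ctx_seqR (hM V hV)
  obtain ⟨E, hE, hE'⟩ := ctx_comp hD hK
  have := h E hE N (fun W hW => by
    rw [hE', hK']; exact hN _ ⟨W, hW, V, hV, rfl⟩) U hU
  rwa [hE', hK'] at this

theorem LeS.seq_left (h : LeS H M M') (hL : AllSP L) :
    LeS H (Lang.seq L M) (Lang.seq L M') := by
  rintro D hD N hN _ ⟨U, hU, V, hV, rfl⟩
  obtain ⟨K, hK, hK'⟩ := ctx_seqL (hL U hU)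
  obtain ⟨E, hE, hE'⟩ := ctx_comp hD hK
  have := h E hE N (fun W hW => by
    rw [hE', hK']; exact hN _ ⟨U, hU, W, hW, rfl⟩) V hV
  rwa [hE', hK'] at this

theorem LeS.par_right (h : LeS H L L') (hM : AllSP M) :
    LeS H (Lang.par L M) (Lang.par L' M) := by
  rintro D hD N hN _ ⟨U, hU, V, hV, rfl⟩
  obtain ⟨K, hK, hK'⟩ := ctx_parR (hM V hV)
  obtain ⟨E, hE, hE'⟩ := ctx_comp hD hK
  have := h E hE N (fun W hW => by
    rw [hE', hK']; exact hN _ ⟨W, hW, V, hV, rfl⟩) U hU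
  rwa [hE', hK'] at this

theorem langpar_comm (L M : Lang A) : Lang.par L M = Lang.par M L := by
  ext W
  constructor <;>
  · rintro ⟨U, hU, V, hV, rfl⟩
    exact ⟨V, hV, U, hU, par_comm _ _⟩

theorem LeS.par_left (h : LeS H M M') (hL : AllSP L) :
    LeS H (Lang.par L M) (Lang.par L M') := by
  rw [langpar_comm L, langpar_comm L]
  exact h.par_right hL

theorem langseq_assoc (L M K : Lang A) :
    Lang.seq L (Lang.seq M K) = Lang.seq (Lang.seq L M) K := by
  ext W
  constructor
  · rintro ⟨U, hU, _, ⟨V, hV, X, hX, rfl⟩, rfl⟩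
    exact ⟨_, ⟨U, hU, V, hV, rfl⟩, X, hX, seq_assoc _ _ _⟩
  · rintro ⟨_, ⟨U, hU, V, hV, rfl⟩, X, hX, rfl⟩
    exact ⟨U, hU, _, ⟨V, hV, X, hX, rfl⟩, (seq_assoc _ _ _).symm⟩

theorem langpar_assoc (L M K : Lang A) :
    Lang.par L (Lang.par M K) = Lang.par (Lang.par L M) K := by
  ext W
  constructor
  · rintro ⟨U, hU, _, ⟨V, hV, X, hX, rfl⟩, rfl⟩
    exact ⟨_, ⟨U, hU, V, hV, rfl⟩, X, hX, par_assoc _ _ _⟩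
  · rintro ⟨_, ⟨U, hU, V, hV, rfl⟩, X, hX, rfl⟩
    exact ⟨U, hU, _, ⟨V, hV, X, hX, rfl⟩, (par_assoc _ _ _).symm⟩

theorem langseq_one (L : Lang A) : Lang.seq L {Pomset.empty A} = L := by
  ext W
  constructor
  · rintro ⟨U, hU, V, rfl, rfl⟩
    rwa [seq_one]
  · intro h; exact ⟨W, h, _, rfl, (seq_one W).symm⟩

theorem langone_seq (L : Lang A) : Lang.seq {Pomset.empty A} L = L := by
  ext W
  constructor
  · rintro ⟨U, rfl, V, hV, rfl⟩
    rwa [one_seq]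
  · intro h; exact ⟨_, rfl, W, h, (one_seq W).symm⟩

theorem langpar_one (L : Lang A) : Lang.par L {Pomset.empty A} = L := by
  ext W
  constructor
  · rintro ⟨U, hU, V, rfl, rfl⟩
    rwa [par_one]
  · intro h; exact ⟨W, h, _, rfl, (par_one W).symm⟩

theorem langpow_succ' (L : Lang A) (n : ℕ) : L.pow (n + 1) = Lang.seq L (L.pow n) := by
  induction n with
  | zero => show Lang.seq {Pomset.empty A} L = Lang.seq L {Pomset.empty A}
            rw [langseq_one, langone_seq]
  | succ n ih =>
    show Lang.seq (L.pow (n + 1)) L = Lang.seq L (Lang.seq (L.pow n) L)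
    rw [ih, langseq_assoc]

theorem pow_le_star (L : Lang A) (n : ℕ) : L.pow n ⊆ L.star := Set.subset_iUnion _ n

theorem star_unfoldR (L : Lang A) : {Pomset.empty A} ∪ Lang.seq L.star L = L.star := by
  apply Set.Subset.antisymm
  · rintro W (h | ⟨U, hU, V, hV, rfl⟩)
    · exact pow_le_star L 0 h
    · obtain ⟨n, hn⟩ := Set.mem_iUnion.1 hU
      exact pow_le_star L (n + 1) ⟨U, hn, V, hV, rfl⟩
  · intro W hW
    obtain ⟨n, hn⟩ := Set.mem_iUnion.1 hW
    cases n with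
    | zero => exact Or.inl hn
    | succ n =>
      obtain ⟨U, hU, V, hV, rfl⟩ := hn
      exact Or.inr ⟨U, pow_le_star L n hU, V, hV, rfl⟩

theorem star_unfoldL (L : Lang A) : {Pomset.empty A} ∪ Lang.seq L L.star = L.star := by
  apply Set.Subset.antisymm
  · rintro W (h | ⟨U, hU, V, hV, rfl⟩)
    · exact pow_le_star L 0 h
    · obtain ⟨n, hn⟩ := Set.mem_iUnion.1 hV
      exact pow_le_star L (n + 1) (by rw [langpow_succ']; exact ⟨U, hU, V, hn, rfl⟩)
  · intro W hW
    obtain ⟨n, hn⟩ := Set.mem_iUnion.1 hW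
    cases n with
    | zero => exact Or.inl hn
    | succ n =>
      rw [langpow_succ'] at hn
      obtain ⟨U, hU, V, hV, rfl⟩ := hn
      exact Or.inr ⟨U, hU, V, pow_le_star L n hV, rfl⟩

theorem LeS.star (h : LeS H L L') (hL : AllSP L) (hL' : AllSP L') :
    LeS H L.star L'.star := by
  have key : ∀ n, LeS H (L.pow n) (L'.pow n) := by
    intro n
    induction n with
    | zero => exact LeS.of_subset (fun _ h => h)
    | succ n ih => exact (ih.seq_right hL).trans (h.seq_left (isSP_pow hL' n))
  intro D hD N hN U hU
  obtain ⟨n, hn⟩ := Set.mem_iUnion.1 hU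
  exact ((key n).trans (LeS.of_subset (pow_le_star L' n))) D hD N hN U hn

theorem LeS.lfpL (h : LeS H (L ∪ Lang.seq M K) K) (hM : AllSP M) :
    LeS H (Lang.seq M.star L) K := by
  have h1 : LeS H L K := (LeS.of_subset (fun _ h => Or.inl h)).trans h
  have h2 : LeS H (Lang.seq M K) K := (LeS.of_subset (fun _ h => Or.inr h)).trans h
  have key : ∀ n, LeS H (Lang.seq (M.pow n) K) K := by
    intro n
    induction n with
    | zero => exact LeS.of_subset (langone_seq K).subset
    | succ n ih =>
      refine LeS.trans ?_ ih
      show LeS H (Lang.seq (Lang.seq (M.pow n) M) K) _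
      rw [← langseq_assoc]
      exact h2.seq_left (isSP_pow hM n)
  rintro D hD N hN _ ⟨U, hU, V, hV, rfl⟩
  obtain ⟨n, hn⟩ := Set.mem_iUnion.1 hU
  exact ((h1.seq_left (isSP_pow hM n)).trans (key n)) D hD N hN _ ⟨U, hn, V, hV, rfl⟩

theorem LeS.lfpR (h : LeS H (L ∪ Lang.seq M K) M) (hK : AllSP K) :
    LeS H (Lang.seq L K.star) M := by
  have h1 : LeS H L M := (LeS.of_subset (fun _ h => Or.inl h)).trans h
  have h2 : LeS H (Lang.seq M K) M := (LeS.of_subset (fun _ h => Or.inr h)).trans h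
  have key : ∀ n, LeS H (Lang.seq M (K.pow n)) M := by
    intro n
    induction n with
    | zero => exact LeS.of_subset (langseq_one M).subset
    | succ n ih =>
      refine LeS.trans ?_ h2
      show LeS H (Lang.seq M (Lang.seq (K.pow n) K)) _
      rw [langseq_assoc]
      exact ih.seq_right hK
  rintro D hD N hN _ ⟨U, hU, V, hV, rfl⟩
  obtain ⟨n, hn⟩ := Set.mem_iUnion.1 hV
  exact ((h1.seq_right (isSP_pow hK n)).trans (key n)) D hD N hN _ ⟨U, hU, V, hn, rfl⟩

/-- Mutual contextual containment. -/
def EqS (H : HypSet A) (L M : Lang A) : Prop := LeS H L M ∧ LeS H M L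

theorem EqS.of_eq (h : L = M) : EqS H L M :=
  ⟨LeS.of_subset h.subset, LeS.of_subset h.symm.subset⟩

theorem LeS.eqS (h : LeS H L M) : EqS H (L ∪ M) M :=
  ⟨h.union (LeS.of_subset (fun _ h => h)), LeS.of_subset (fun _ h => Or.inr h)⟩

theorem EqS.le (h : EqS H (L ∪ M) M) : LeS H L M :=
  (LeS.of_subset (fun _ h => Or.inl h)).trans h.1

theorem soundness {e f : Term A} (h : CongH H e f) : EqS H e.lang f.lang := by
  induction h with
  | refl e => exact EqS.of_eq rfl
  | symm _ ih => exact ⟨ih.2, ih.1⟩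
  | trans _ _ ih ih' => exact ⟨ih.1.trans ih'.1, ih'.2.trans ih.2⟩
  | addCong _ _ ih ih' =>
    exact ⟨(ih.1.trans (LeS.of_subset Set.subset_union_left)).union
        (ih'.1.trans (LeS.of_subset Set.subset_union_right)),
      (ih.2.trans (LeS.of_subset Set.subset_union_left)).union
        (ih'.2.trans (LeS.of_subset Set.subset_union_right))⟩
  | seqCong _ _ ih ih' =>
    exact ⟨(ih.1.seq_right (isSP_lang _)).trans (ih'.1.seq_left (isSP_lang _)),
      (ih.2.seq_right (isSP_lang _)).trans (ih'.2.seq_left (isSP_lang _))⟩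
  | parCong _ _ ih ih' =>
    exact ⟨(ih.1.par_right (isSP_lang _)).trans (ih'.1.par_left (isSP_lang _)),
      (ih.2.par_right (isSP_lang _)).trans (ih'.2.par_left (isSP_lang _))⟩
  | starCong _ ih =>
    exact ⟨ih.1.star (isSP_lang _) (isSP_lang _), ih.2.star (isSP_lang _) (isSP_lang _)⟩
  | addZero e => exact EqS.of_eq (Set.union_empty _)
  | addIdem e => exact EqS.of_eq (Set.union_self _)
  | addComm e f => exact EqS.of_eq (Set.union_comm _ _)
  | addAssoc e f g => exact EqS.of_eq (Set.union_assoc _ _ _).symm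
  | seqAssoc e f g => exact EqS.of_eq (langseq_assoc _ _ _)
  | seqDistL e f g =>
    refine EqS.of_eq (Set.Subset.antisymm ?_ ?_)
    · rintro _ ⟨U, hU, V, hV | hV, rfl⟩
      · exact Or.inl ⟨U, hU, V, hV, rfl⟩
      · exact Or.inr ⟨U, hU, V, hV, rfl⟩
    · rintro _ (⟨U, hU, V, hV, rfl⟩ | ⟨U, hU, V, hV, rfl⟩)
      · exact ⟨U, hU, V, Or.inl hV, rfl⟩
      · exact ⟨U, hU, V, Or.inr hV, rfl⟩
  | seqDistR e f g =>
    refine EqS.of_eq (Set.Subset.antisymm ?_ ?_)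
    · rintro _ ⟨U, hU | hU, V, hV, rfl⟩
      · exact Or.inl ⟨U, hU, V, hV, rfl⟩
      · exact Or.inr ⟨U, hU, V, hV, rfl⟩
    · rintro _ (⟨U, hU, V, hV, rfl⟩ | ⟨U, hU, V, hV, rfl⟩)
      · exact ⟨U, Or.inl hU, V, hV, rfl⟩
      · exact ⟨U, Or.inr hU, V, hV, rfl⟩
  | seqOneR e => exact EqS.of_eq (langseq_one _)
  | seqOneL e => exact EqS.of_eq (langone_seq _)
  | seqZeroR e =>
    refine EqS.of_eq (Set.eq_empty_iff_forall_notMem.2 ?_)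
    rintro _ ⟨U, hU, V, hV, rfl⟩; exact hV
  | seqZeroL e =>
    refine EqS.of_eq (Set.eq_empty_iff_forall_notMem.2 ?_)
    rintro _ ⟨U, hU, V, hV, rfl⟩; exact hU
  | parComm e f => exact EqS.of_eq (langpar_comm _ _)
  | parOne e => exact EqS.of_eq (langpar_one _)
  | parZero e =>
    refine EqS.of_eq (Set.eq_empty_iff_forall_notMem.2 ?_)
    rintro _ ⟨U, hU, V, hV, rfl⟩; exact hV
  | parAssoc e f g => exact EqS.of_eq (langpar_assoc _ _ _)
  | parDist e f g =>
    refine EqS.of_eq (Set.Subset.antisymm ?_ ?_)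
    · rintro _ ⟨U, hU, V, hV | hV, rfl⟩
      · exact Or.inl ⟨U, hU, V, hV, rfl⟩
      · exact Or.inr ⟨U, hU, V, hV, rfl⟩
    · rintro _ (⟨U, hU, V, hV, rfl⟩ | ⟨U, hU, V, hV, rfl⟩)
      · exact ⟨U, hU, V, Or.inl hV, rfl⟩
      · exact ⟨U, hU, V, Or.inr hV, rfl⟩
  | starUnfoldL e => exact EqS.of_eq (star_unfoldL _)
  | starUnfoldR e => exact EqS.of_eq (star_unfoldR _)
  | lfpL _ ih => exact (LeS.lfpL (EqS.le ih) (isSP_lang _)).eqS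
  | lfpR _ ih => exact (LeS.lfpR (EqS.le ih) (isSP_lang _)).eqS
  | hyp hef =>
    refine LeS.eqS ?_
    intro D hD N hN U hU
    exact closure.step hef hD hN hU

end sound

/-! ### The action of a letter map -/

section act
variable {A : Type}

/-- Semantic image of a pomset under a letter map. -/
def SubR (r : A → Term A) (U X : Pomset A) : Prop :=
  ∃ u : LPoset A, mkP u = U ∧ ∃ v : u.carrier → LPoset A,
    (∀ x, mkP (v x) ∈ (r (u.lab x)).lang) ∧ X = mkP (subP u.carrier v)

theorem subR_mk {r : A → Term A} {u : LPoset A} {X : Pomset A} : SubR r (mkP u) X ↔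
    ∃ v : u.carrier → LPoset A,
      (∀ x, mkP (v x) ∈ (r (u.lab x)).lang) ∧ X = mkP (subP u.carrier v) := by
  constructor
  · rintro ⟨u', hu, v, hv, rfl⟩
    obtain ⟨e, he, h⟩ := subP_of_iso (mkP_eq.1 hu) v
    exact ⟨fun x => v (e x), fun x => by rw [← he]; exact hv _, mkP_eq.2 h⟩
  · rintro ⟨v, hv, h⟩
    exact ⟨u, rfl, v, hv, h⟩

theorem subR_empty {r : A → Term A} {X : Pomset A} :
    SubR r (Pomset.empty A) X ↔ X = Pomset.empty A := by
  refine (subR_mk (u := LPoset.emptyL A)).trans ?_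
  constructor
  · rintro ⟨v, -, rfl⟩
    exact mkP_eq.2 (subP_empty v)
  · rintro rfl
    exact ⟨fun x => Fin.elim0 x, fun x => Fin.elim0 x, (mkP_eq.2 (subP_empty _)).symm⟩

theorem subR_single {r : A → Term A} {a : A} {X : Pomset A} :
    SubR r (Pomset.single a) X ↔ X ∈ (r a).lang := by
  refine (subR_mk (u := LPoset.singleL a)).trans ?_
  constructor
  · rintro ⟨v, hv, rfl⟩
    rw [show mkP (subP (LPoset.singleL a).carrier v) = _ from mkP_eq.2 (subP_punit v)]
    exact hv PUnit.unit
  · intro h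
    obtain ⟨x, rfl⟩ := exists_mkP X
    exact ⟨fun _ => x, fun _ => h, (mkP_eq.2 (subP_punit (fun _ => x))).symm⟩

theorem subR_seq {r : A → Term A} {U V X : Pomset A} : SubR r (Pomset.seq U V) X ↔
    ∃ U', SubR r U U' ∧ ∃ V', SubR r V V' ∧ X = Pomset.seq U' V' := by
  obtain ⟨u, rfl⟩ := exists_mkP U
  obtain ⟨v, rfl⟩ := exists_mkP V
  rw [mkP_seq, subR_mk]
  constructor
  · rintro ⟨w, hw, rfl⟩
    exact ⟨_, subR_mk.2 ⟨fun x => w (sl x), fun x => hw (sl x), rfl⟩,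
      _, subR_mk.2 ⟨fun x => w (sr x), fun x => hw (sr x), rfl⟩,
      mkP_eq.2 (subP_seqL u v w)⟩
  · rintro ⟨U', hU, V', hV, rfl⟩
    obtain ⟨w, hw, rfl⟩ := subR_mk.1 hU
    obtain ⟨w', hw', rfl⟩ := subR_mk.1 hV
    refine ⟨fun z => Sum.elim w w' (ofLex z), ?_,
      (mkP_eq.2 (subP_seqL u v (fun z => Sum.elim w w' (ofLex z)))).symm⟩
    rintro (x | x)
    · exact hw x
    · exact hw' x

theorem subR_par {r : A → Term A} {U V X : Pomset A} : SubR r (Pomset.par U V) X ↔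
    ∃ U', SubR r U U' ∧ ∃ V', SubR r V V' ∧ X = Pomset.par U' V' := by
  obtain ⟨u, rfl⟩ := exists_mkP U
  obtain ⟨v, rfl⟩ := exists_mkP V
  rw [mkP_par, subR_mk]
  constructor
  · rintro ⟨w, hw, rfl⟩
    exact ⟨_, subR_mk.2 ⟨fun x => w (pl x), fun x => hw (pl x), rfl⟩,
      _, subR_mk.2 ⟨fun x => w (pr x), fun x => hw (pr x), rfl⟩,
      mkP_eq.2 (subP_parL u v w)⟩
  · rintro ⟨U', hU, V', hV, rfl⟩
    obtain ⟨w, hw, rfl⟩ := subR_mk.1 hU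
    obtain ⟨w', hw', rfl⟩ := subR_mk.1 hV
    refine ⟨fun z => Sum.elim w w' z, ?_,
      (mkP_eq.2 (subP_parL u v (fun z => Sum.elim w w' z))).symm⟩
    rintro (x | x)
    · exact hw x
    · exact hw' x

/-- Semantic image of a language. -/
def imgR (r : A → Term A) (L : Lang A) : Lang A := {X | ∃ U ∈ L, SubR r U X}

theorem imgR_seq (r : A → Term A) (L M : Lang A) :
    imgR r (Lang.seq L M) = Lang.seq (imgR r L) (imgR r M) := by
  ext X
  constructor
  · rintro ⟨_, ⟨U, hU, V, hV, rfl⟩, h⟩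
    obtain ⟨U', hU', V', hV', rfl⟩ := subR_seq.1 h
    exact ⟨U', ⟨U, hU, hU'⟩, V', ⟨V, hV, hV'⟩, rfl⟩
  · rintro ⟨U', ⟨U, hU, hU'⟩, V', ⟨V, hV, hV'⟩, rfl⟩
    exact ⟨_, ⟨U, hU, V, hV, rfl⟩, subR_seq.2 ⟨U', hU', V', hV', rfl⟩⟩

theorem imgR_par (r : A → Term A) (L M : Lang A) :
    imgR r (Lang.par L M) = Lang.par (imgR r L) (imgR r M) := by
  ext X
  constructor
  · rintro ⟨_, ⟨U, hU, V, hV, rfl⟩, h⟩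
    obtain ⟨U', hU', V', hV', rfl⟩ := subR_par.1 h
    exact ⟨U', ⟨U, hU, hU'⟩, V', ⟨V, hV, hV'⟩, rfl⟩
  · rintro ⟨U', ⟨U, hU, hU'⟩, V', ⟨V, hV, hV'⟩, rfl⟩
    exact ⟨_, ⟨U, hU, V, hV, rfl⟩, subR_par.2 ⟨U', hU', V', hV', rfl⟩⟩

theorem imgR_one (r : A → Term A) : imgR r {Pomset.empty A} = {Pomset.empty A} := by
  ext X
  constructor
  · rintro ⟨_, rfl, h⟩
    exact subR_empty.1 h
  · rintro rfl
    exact ⟨_, rfl, subR_empty.2 rfl⟩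

theorem imgR_pow (r : A → Term A) (L : Lang A) (n : ℕ) :
    imgR r (L.pow n) = (imgR r L).pow n := by
  induction n with
  | zero => exact imgR_one r
  | succ n ih =>
    show imgR r (Lang.seq (L.pow n) L) = Lang.seq ((imgR r L).pow n) (imgR r L)
    rw [imgR_seq, ih]

theorem imgR_lang (r : A → Term A) (e : Term A) : (rTerm r e).lang = imgR r e.lang := by
  induction e with
  | zero =>
    symm
    refine Set.eq_empty_iff_forall_notMem.2 ?_
    rintro _ ⟨U, hU, h⟩; exact hU
  | one => exact (imgR_one r).symm
  | var a =>
    ext X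
    constructor
    · intro h; exact ⟨_, rfl, subR_single.2 h⟩
    · rintro ⟨_, rfl, h⟩; exact subR_single.1 h
  | add e f ihe ihf =>
    show (rTerm r e).lang ∪ (rTerm r f).lang = imgR r (e.lang ∪ f.lang)
    rw [ihe, ihf]
    ext X
    constructor
    · rintro (⟨U, hU, h⟩ | ⟨U, hU, h⟩)
      · exact ⟨U, Or.inl hU, h⟩
      · exact ⟨U, Or.inr hU, h⟩
    · rintro ⟨U, hU | hU, h⟩
      · exact Or.inl ⟨U, hU, h⟩
      · exact Or.inr ⟨U, hU, h⟩
  | seq e f ihe ihf =>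
    show Lang.seq (rTerm r e).lang (rTerm r f).lang = imgR r (Lang.seq e.lang f.lang)
    rw [imgR_seq, ihe, ihf]
  | par e f ihe ihf =>
    show Lang.par (rTerm r e).lang (rTerm r f).lang = imgR r (Lang.par e.lang f.lang)
    rw [imgR_par, ihe, ihf]
  | star e ih =>
    show Lang.star (rTerm r e).lang = imgR r (Lang.star e.lang)
    rw [ih]
    ext X
    constructor
    · intro h
      obtain ⟨n, hn⟩ := Set.mem_iUnion.1 h
      rw [← imgR_pow] at hn
      obtain ⟨U, hU, h⟩ := hn
      exact ⟨U, pow_le_star _ n hU, h⟩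
    · rintro ⟨U, hU, h⟩
      obtain ⟨n, hn⟩ := Set.mem_iUnion.1 hU
      refine pow_le_star _ n ?_
      rw [← imgR_pow]
      exact ⟨U, hn, h⟩

theorem subR_ins {r : A → Term A} {C : Pomset (Option A)} (hC : C.IsSPCtx) {V X : Pomset A}
    (h : SubR r (C.ins V) X) : ∃ D : Pomset (Option A), D.IsSPCtx ∧
      (∃ V', SubR r V V' ∧ X = D.ins V') ∧
      ∀ W W', SubR r W W' → SubR r (C.ins W) (D.ins W') := by
  obtain ⟨c, rfl⟩ := exists_mkP C
  obtain ⟨u, rfl⟩ := exists_mkP V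
  rw [mkP_ins, subR_mk] at h
  obtain ⟨v, hv, rfl⟩ := h
  obtain ⟨hD, hD'⟩ := isSPCtx_subP c hC.1 hC.2
    (fun x => if h : c.lab x = none then LPoset.singleL none else (v (il x h)).mapL some)
    (fun x => by
      by_cases h : c.lab x = none
      · rw [dif_pos h]; exact Pomset.IsSP.single _
      · rw [dif_neg h]; exact isSP_map (isSP_lang _ _ (hv _)))
    (fun x h => by rw [dif_pos h]; exact ⟨PUnit.unit, rfl, fun _ _ => rfl⟩)
    (fun x h => by rw [dif_neg h]; exact fun y => Option.some_ne_none _)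
  have key : ∀ (w : LPoset A) (t : (c.insL w).carrier → LPoset A),
      (∀ x h, t (il x h) = v (il x h)) →
      mkP (subP (c.insL w).carrier t) = (mkP (subP c.carrier
        (fun x => if h : c.lab x = none then LPoset.singleL none
          else (v (il x h)).mapL some))).ins (mkP (subP w.carrier (fun y => t (ir y)))) := by
    intro w t ht
    rw [hD', mkP_eq]
    refine (subP_insL c hC.1 w t).trans (subP_congr' _ _ fun p => ?_)
    by_cases h : c.lab p = none
    · rw [dif_pos h, dif_pos h]
      exact (plug_star _).symm
    · rw [dif_neg h, dif_neg h, ht]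
      exact (plug_map _ _).symm
  refine ⟨_, hD, ⟨_, subR_mk.2 ⟨fun y => v (ir y), fun y => hv (ir y), rfl⟩,
    key u v fun _ _ => rfl⟩, ?_⟩
  intro W W' hW
  obtain ⟨w, rfl⟩ := exists_mkP W
  obtain ⟨t, ht, rfl⟩ := subR_mk.1 hW
  rw [mkP_ins, subR_mk]
  let T : (c.insL w).carrier → LPoset A := fun z =>
    Sum.elim (fun (x : {x : c.carrier // c.lab x ≠ none}) => v (il x.1 x.2)) t z
  refine ⟨T, ?_, (key w T fun _ _ => rfl).symm⟩
  rintro (x | x)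
  · exact hv (il x.1 x.2)
  · exact ht x

theorem imgR_cl {r : A → Term A} {H H' : HypSet A}
    (hyps : ∀ p ∈ H, LeH H' (rTerm r p.1) (rTerm r p.2)) (L : Lang A) {U : Pomset A}
    (hU : closure H L U) : ∀ X, SubR r U X → X ∈ cl H' (imgR r L) := by
  induction hU with
  | base h => intro X hX; exact closure.base ⟨_, h, hX⟩
  | @step e f hef C hC hf U hU ih =>
    intro X hX
    obtain ⟨D, hD, ⟨V', hV', rfl⟩, hall⟩ := subR_ins hC hX
    have hle : LeS H' (rTerm r e).lang (rTerm r f).lang := (soundness (hyps _ hef)).le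
    refine hle D hD _ ?_ V' (by rw [imgR_lang]; exact ⟨U, hU, hV'⟩)
    intro W' hW'
    rw [imgR_lang] at hW'
    obtain ⟨W, hW, hWW⟩ := hW'
    exact ih W hW _ (hall W W' hWW)

theorem cl_mono_cl {H : HypSet A} {L M : Lang A} (h : L ⊆ cl H M) : cl H L ⊆ cl H M := by
  intro U hU
  induction hU with
  | base hU => exact h hU
  | step hef hC _ hU ih => exact closure.step hef hC ih hU

theorem rTerm_equiv {r : A → Term A} {H : HypSet A} (h : ∀ a, CongH H (r a) (.var a))
    (e : Term A) : CongH H e (rTerm r e) := by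
  induction e with
  | zero => exact CongH.refl _
  | one => exact CongH.refl _
  | var a => exact (h a).symm
  | add e f ihe ihf => exact CongH.addCong ihe ihf
  | seq e f ihe ihf => exact CongH.seqCong ihe ihf
  | par e f ihe ihf => exact CongH.parCong ihe ihf
  | star e ih => exact CongH.starCong ih

theorem reflect_le {r : A → Term A} {H H' : HypSet A}
    (hyps : ∀ p ∈ H, LeH H' (rTerm r p.1) (rTerm r p.2)) {e f : Term A}
    (h : cl H e.lang ⊆ cl H f.lang) : cl H' (rTerm r e).lang ⊆ cl H' (rTerm r f).lang := by
  apply cl_mono_cl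
  intro X hX
  rw [imgR_lang] at hX ⊢
  obtain ⟨U, hU, hUX⟩ := hX
  exact imgR_cl hyps f.lang (h (closure.base hU)) X hUX

end act


end CKAH

namespace CKAH

/-- **Reification yields reduction**: if `H` implies `H'` and `r` is a reification from
`H` to `H'`, then the homomorphic extension of `r` to terms is a reduction. -/
theorem reification_to_reduction (A : Type) (Γ : Set A) (H H' : HypSet A)
    (r : A → Term A) (himp : Implies H H') (hr : IsReification Γ H H' r) :
    IsReduction H H' (rTerm r) := by
  refine ⟨himp, rTerm_equiv hr.equiv, fun e f h => ?_⟩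
  exact Set.Subset.antisymm (reflect_le hr.hyps h.subset) (reflect_le hr.hyps h.symm.subset)

end CKAH
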